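/- arXiv:1112.0813 — 2 statements merged into one kernel-verified Lean document; each statement's English description precedes it below -/
import Mathlib

section
/- Let g : ℝ → ℝ be smooth with g, g', g'' ∈ L²(ℝ) and ‖ε g'‖_{L∞} ≤ 1/2. With c(ξ,ξ̃) = (g(ξ)-g(ξ̃))/(ξ-ξ̃), the double integral I₁ = ∫∫ Ψ''(c; ε) c_ξ g''(ξ)² dξ dξ̃, where Ψ''(c;ε) = c/(1-εc)², satisfies |I₁| ≤ (32/3) ‖g'‖_{L²} ‖g''‖_{L²}³. -/
open MeasureTheory

/-! Substituting `t = ξ + h`, the difference quotient `c` and its `ξ`-derivative are averages of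
dilates, `c(ξ, ξ + h) = ∫₀¹ g'(ξ + s h) ds` and `c_ξ(ξ, ξ + h) = ∫₀¹ (1 - s) g''(ξ + s h) ds`.
The map `h ↦ f (ξ + s h)` has `L²` norm `s ^ (-1/2) ‖f‖`, so Minkowski's integral inequality bounds
`c(ξ, ·)` and `c_ξ(ξ, ·)` in `L²` with the constants `∫₀¹ s ^ (-1/2) ds = 2` and
`∫₀¹ (1 - s) s ^ (-1/2) ds = 4/3`. If `ε g' ≤ δ < 1`, then `ε c ≤ δ` by the mean value theorem, so
`|Ψ''(c; ε)| ≤ |c| / (1 - δ)²`. Cauchy–Schwarz in `t` then bounds the integral of `|Ψ''(c; ε) c_ξ|`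
over `t` uniformly in `ξ`, and it remains to integrate against `g''(ξ)²`. -/

open Set
open scoped ENNReal

section LpNorm

variable {α β E F : Type*} [MeasurableSpace α] [MeasurableSpace β] {μ : Measure α} {ν : Measure β}
  [NormedAddCommGroup E] [NormedAddCommGroup F]

lemma lintegral_enorm_mul_enorm_le_eLpNorm_mul_eLpNorm (p q : ℝ≥0∞) [ENNReal.HolderTriple p q 1]
    {f : α → E} {k : α → F} (hf : AEStronglyMeasurable f μ) (hk : AEStronglyMeasurable k μ) :
    ∫⁻ x, ‖f x‖ₑ * ‖k x‖ₑ ∂μ ≤ eLpNorm f p μ * eLpNorm k q μ := by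
  simpa [eLpNorm_one_eq_lintegral_enorm] using
    eLpNorm_le_eLpNorm_mul_eLpNorm_of_nnnorm (r := 1) hf hk (fun u v => ‖u‖ * ‖v‖) 1
      (.of_forall fun x => by simp)

lemma eLpNorm_two_sq (f : α → E) : eLpNorm f 2 μ ^ 2 = ∫⁻ x, ‖f x‖ₑ ^ 2 ∂μ := by
  simpa using eLpNorm_nnreal_pow_eq_lintegral (f := f) (μ := μ) (p := 2) two_ne_zero

lemma eLpNorm_two_eq_ofReal_sqrt {f : α → ℝ} (hf : AEStronglyMeasurable f μ)
    (hf2 : Integrable (fun x => f x ^ 2) μ) :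
    eLpNorm f 2 μ = ENNReal.ofReal √(∫ x, f x ^ 2 ∂μ) := by
  simp [((memLp_two_iff_integrable_sq hf).2 hf2).eLpNorm_eq_integral_rpow_norm two_ne_zero
    ENNReal.ofNat_ne_top, Real.sqrt_eq_rpow]

variable [NormedSpace ℝ E]

lemma enorm_integral_integral_le_lintegral_enorm (f : α → β → E) :
    ‖∫ x, ∫ y, f x y ∂ν ∂μ‖ₑ ≤ ∫⁻ x, ∫⁻ y, ‖f x y‖ₑ ∂ν ∂μ :=
  (enorm_integral_le_lintegral_enorm _).trans <|
    lintegral_mono fun _ => enorm_integral_le_lintegral_enorm _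

-- Expanding the square of the inner integral reduces Minkowski's inequality in `L²` to
-- Cauchy–Schwarz for the pairs `f · y`, `f · z`.
lemma eLpNorm_two_integral_le_lintegral_eLpNorm [SFinite μ] [SFinite ν] {f : α → β → E}
    (hf : StronglyMeasurable (Function.uncurry f)) :
    eLpNorm (fun x => ∫ y, f x y ∂ν) 2 μ ≤ ∫⁻ y, eLpNorm (f · y) 2 μ ∂ν := by
  set N : β → ℝ≥0∞ := fun y => eLpNorm (f · y) 2 μ
  have hN : Measurable N := by
    simp only [N, eLpNorm_eq_lintegral_rpow_enorm_toReal two_ne_zero ENNReal.ofNat_ne_top]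
    exact (Measurable.lintegral_prod_left' (hf.enorm.pow_const _)).pow_const _
  have hf_enorm : Measurable fun q : α × β => ‖f q.1 q.2‖ₑ := hf.enorm
  have hf_left (x : α) : Measurable fun y => ‖f x y‖ₑ := hf.of_uncurry_left.enorm
  have hf_right (y : β) : AEStronglyMeasurable (f · y) μ :=
    hf.of_uncurry_right.aestronglyMeasurable
  refine (ENNReal.pow_le_pow_left_iff two_ne_zero).1 ?_
  calc eLpNorm (fun x => ∫ y, f x y ∂ν) 2 μ ^ 2
      ≤ ∫⁻ x, (∫⁻ y, ‖f x y‖ₑ ∂ν) ^ 2 ∂μ := by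
        rw [eLpNorm_two_sq]
        gcongr
        exact enorm_integral_le_lintegral_enorm _
    _ = ∫⁻ x, ∫⁻ p : β × β, ‖f x p.1‖ₑ * ‖f x p.2‖ₑ ∂ν.prod ν ∂μ := by
        congr! 2 with x
        rw [sq, lintegral_prod_mul (hf_left x).aemeasurable (hf_left x).aemeasurable]
    _ = ∫⁻ p : β × β, ∫⁻ x, ‖f x p.1‖ₑ * ‖f x p.2‖ₑ ∂μ ∂ν.prod ν :=
        lintegral_lintegral_swap <| Measurable.aemeasurable <|
          (hf_enorm.comp (by fun_prop : Measurable fun q : α × β × β => (q.1, q.2.1))).mul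
            (hf_enorm.comp (by fun_prop : Measurable fun q : α × β × β => (q.1, q.2.2)))
    _ ≤ ∫⁻ p : β × β, N p.1 * N p.2 ∂ν.prod ν := by
        gcongr with p
        exact lintegral_enorm_mul_enorm_le_eLpNorm_mul_eLpNorm 2 2 (hf_right p.1) (hf_right p.2)
    _ = (∫⁻ y, N y ∂ν) ^ 2 := by
        rw [sq, lintegral_prod_mul hN.aemeasurable hN.aemeasurable]

end LpNorm

section Dilation

variable {E : Type*} [NormedAddCommGroup E]

lemma eLpNorm_comp_add_mul (f : ℝ → E) (p : ℝ≥0∞) (a : ℝ) {s : ℝ} (hs : s ≠ 0) :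
    eLpNorm (fun h => f (a + s * h)) p =
      ENNReal.ofReal |s⁻¹| ^ (1 / p).toReal * eLpNorm f p := by
  have hmap : Measure.map (fun h => a + s * h) volume = ENNReal.ofReal |s⁻¹| • volume := by
    rw [show (fun h => a + s * h) = (a + ·) ∘ (s * ·) from rfl,
      ← Measure.map_map (by fun_prop) (by fun_prop), Real.map_volume_mul_left hs,
      Measure.map_smul, map_add_left_eq_self]
  have hemb : MeasurableEmbedding fun h => a + s * h :=
    (measurableEmbedding_addLeft a).comp (measurableEmbedding_mulLeft₀ hs)
  rw [← smul_eq_mul, ← eLpNorm_smul_measure_of_ne_zero (by simpa using hs), ← hmap,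
    hemb.eLpNorm_map_measure]
  rfl

variable [NormedSpace ℝ E]

lemma eLpNorm_two_smul_comp_add_mul (c : ℝ) (f : ℝ → E) (a : ℝ) {s : ℝ} (hs : 0 < s) :
    eLpNorm (fun h => c • f (a + s * h)) 2 = ‖c * s ^ (-(1 / 2) : ℝ)‖ₑ * eLpNorm f 2 := by
  have hscale : ENNReal.ofReal |s⁻¹| ^ (1 / 2 : ℝ≥0∞).toReal = ‖s ^ (-(1 / 2) : ℝ)‖ₑ := by
    rw [Real.enorm_of_nonneg (by positivity), abs_of_pos (by positivity),
      ENNReal.ofReal_rpow_of_pos (by positivity), Real.inv_rpow hs.le, ← Real.rpow_neg hs.le]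
    norm_num
  have hsmul := eLpNorm_const_smul c (fun h => f (a + s * h)) 2 volume
  rw [eLpNorm_comp_add_mul f 2 a hs.ne', hscale, ← mul_assoc, ← enorm_mul] at hsmul
  exact hsmul

lemma eLpNorm_two_le_of_eq_integral_dilation {w : ℝ → ℝ} {f F : ℝ → E} {a : ℝ}
    (hw : Measurable w) (hw_nonneg : ∀ s ∈ Ioc (0 : ℝ) 1, 0 ≤ w s)
    (hw_int : IntervalIntegrable (fun s => w s * s ^ (-(1 / 2) : ℝ)) volume 0 1)
    (hf : StronglyMeasurable f)
    (hF : ∀ h ≠ 0, F (a + h) = ∫ s in (0 : ℝ)..1, w s • f (a + s * h)) :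
    eLpNorm F 2 ≤
      ENNReal.ofReal (∫ s in (0 : ℝ)..1, w s * s ^ (-(1 / 2) : ℝ)) * eLpNorm f 2 := by
  have hmeas : StronglyMeasurable (Function.uncurry fun h s : ℝ => w s • f (a + s * h)) :=
    (hw.stronglyMeasurable.comp_measurable measurable_snd).smul
      (hf.comp_measurable (by fun_prop : Measurable fun q : ℝ × ℝ => a + q.2 * q.1))
  calc eLpNorm F 2 volume = eLpNorm (fun h => F (a + h)) 2 volume := by
        simpa using (eLpNorm_comp_add_mul F 2 a one_ne_zero).symm
    _ = eLpNorm (fun h => ∫ s in Ioc (0 : ℝ) 1, w s • f (a + s * h)) 2 volume := by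
        refine eLpNorm_congr_ae ?_
        filter_upwards [Measure.ae_ne volume 0] with h hh
        rw [hF h hh, intervalIntegral.integral_of_le zero_le_one]
    _ ≤ ∫⁻ s in Ioc (0 : ℝ) 1, eLpNorm (fun h => w s • f (a + s * h)) 2 volume :=
        eLpNorm_two_integral_le_lintegral_eLpNorm hmeas
    _ = ∫⁻ s in Ioc (0 : ℝ) 1, ‖w s * s ^ (-(1 / 2) : ℝ)‖ₑ * eLpNorm f 2 volume :=
        setLIntegral_congr_fun measurableSet_Ioc fun s hs =>
          eLpNorm_two_smul_comp_add_mul (w s) f a hs.1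
    _ = (∫⁻ s in Ioc (0 : ℝ) 1, ‖w s * s ^ (-(1 / 2) : ℝ)‖ₑ) * eLpNorm f 2 volume :=
        lintegral_mul_const _ (by fun_prop)
    _ = ENNReal.ofReal (∫ s in (0 : ℝ)..1, w s * s ^ (-(1 / 2) : ℝ)) * eLpNorm f 2 volume := by
        rw [intervalIntegral.integral_of_le zero_le_one, ← ofReal_integral_norm_eq_lintegral_enorm
          ((intervalIntegrable_iff_integrableOn_Ioc_of_le zero_le_one).1 hw_int)]
        congr 2
        exact setIntegral_congr_fun measurableSet_Ioc fun s hs => Real.norm_of_nonneg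
          (mul_nonneg (hw_nonneg s hs) (Real.rpow_nonneg hs.1.le _))

end Dilation

section DividedDifference

-- The divided difference `g[a, a, b]`, which is the derivative of `slope g · b` at `a ≠ b`.
lemma slope_dslope_self {𝕜 : Type*} [NontriviallyNormedField 𝕜] (g : 𝕜 → 𝕜) (a b : 𝕜) :
    slope (dslope g a) a b = (deriv g a * (a - b) - (g a - g b)) / (a - b) ^ 2 := by
  rcases eq_or_ne b a with rfl | hab
  · simp
  have hba : b - a ≠ 0 := sub_ne_zero.2 hab
  have hab' : a - b ≠ 0 := sub_ne_zero.2 hab.symm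
  rw [slope_def_field, dslope_same, dslope_of_ne g hab, slope_def_field]
  field_simp
  ring

variable {E : Type*} [NormedAddCommGroup E] [NormedSpace ℝ E] [CompleteSpace E] {g : ℝ → E}

lemma slope_add_eq_integral_deriv (hg : ContDiff ℝ 1 g) (a : ℝ) {h : ℝ} (hh : h ≠ 0) :
    slope g a (a + h) = ∫ s in (0 : ℝ)..1, deriv g (a + s * h) := by
  have hg' : Continuous (deriv g) := hg.continuous_deriv_one
  have hftc := intervalIntegral.integral_unitInterval_deriv_eq_sub (f := g) (f' := deriv g)
    (z₀ := a) (z₁ := h) (hg'.comp (by fun_prop)).continuousOn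
    fun t _ => (hg.differentiable_one _).hasDerivAt
  simp only [smul_eq_mul] at hftc
  rw [slope_def_module, add_sub_cancel_left, ← hftc, inv_smul_smul₀ hh]

lemma slope_dslope_add_eq_integral_deriv_deriv (hg : ContDiff ℝ 2 g) (a : ℝ) {h : ℝ}
    (hh : h ≠ 0) :
    slope (dslope g a) a (a + h) =
      ∫ s in (0 : ℝ)..1, (1 - s) • deriv (deriv g) (a + s * h) := by
  have hg' : ContDiff ℝ 1 (deriv g) := hg.iterate_deriv' 1 1
  have hg'' : Continuous (deriv (deriv g)) := hg'.continuous_deriv_one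
  have hderiv (s : ℝ) :
      HasDerivAt (fun s => deriv g (a + s * h)) (h • deriv (deriv g) (a + s * h)) s :=
    ((hg'.differentiable_one _).hasDerivAt.scomp s
      (((hasDerivAt_id s).mul_const h).const_add a)).congr_deriv (by simp)
  have hparts : h • ∫ s in (0 : ℝ)..1, (1 - s) • deriv (deriv g) (a + s * h) =
      (∫ s in (0 : ℝ)..1, deriv g (a + s * h)) - deriv g a := by
    have hbyparts := intervalIntegral.integral_smul_deriv_eq_deriv_smul (a := 0) (b := 1)
      (u := fun s => 1 - s) (u' := fun _ => -1) (fun s _ => (hasDerivAt_id s).const_sub 1)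
      (fun s _ => hderiv s) (by simp)
      ((hg''.comp (by fun_prop)).const_smul h |>.intervalIntegrable _ _)
    simpa [smul_comm _ h, neg_add_eq_sub] using hbyparts
  rw [slope_def_module, dslope_same, dslope_of_ne g (by simpa using hh), add_sub_cancel_left,
    slope_add_eq_integral_deriv (hg.of_le one_le_two) a hh, ← hparts, inv_smul_smul₀ hh]

lemma eLpNorm_two_slope_le (hg : ContDiff ℝ 1 g) (a : ℝ) :
    eLpNorm (slope g a) 2 ≤ 2 * eLpNorm (deriv g) 2 := by
  have hw : ∫ s in (0 : ℝ)..1, 1 * s ^ (-(1 / 2) : ℝ) = 2 := by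
    simp only [one_mul]
    rw [integral_rpow (by norm_num)]
    norm_num
  have hw_int : IntervalIntegrable (fun s : ℝ => 1 * s ^ (-(1 / 2) : ℝ)) volume 0 1 :=
    (intervalIntegral.intervalIntegrable_rpow' (by norm_num)).const_mul 1
  simpa only [hw, ENNReal.ofReal_ofNat] using eLpNorm_two_le_of_eq_integral_dilation
    measurable_const (fun _ _ => zero_le_one) hw_int hg.continuous_deriv_one.stronglyMeasurable
    fun h hh => by simpa only [one_smul] using slope_add_eq_integral_deriv hg a hh

lemma eLpNorm_two_slope_dslope_le (hg : ContDiff ℝ 2 g) (a : ℝ) :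
    eLpNorm (slope (dslope g a) a) 2 ≤ ENNReal.ofReal (4 / 3) * eLpNorm (deriv (deriv g)) 2 := by
  have hg'' : Continuous (deriv (deriv g)) := (hg.iterate_deriv' 1 1).continuous_deriv_one
  have hsplit : EqOn (fun s : ℝ => s ^ (-(1 / 2) : ℝ) - s ^ (1 / 2 : ℝ))
      (fun s => (1 - s) * s ^ (-(1 / 2) : ℝ)) (uIcc 0 1) := fun s hs => by
    have hs0 : 0 ≤ s := (uIcc_of_le (zero_le_one' ℝ) ▸ hs).1
    have : s ^ (1 / 2 : ℝ) = s * s ^ (-(1 / 2) : ℝ) := by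
      rw [← Real.rpow_one_add' hs0 (by norm_num)]
      norm_num
    simp only [this, sub_mul, one_mul]
  have hint_neg : IntervalIntegrable (fun s : ℝ => s ^ (-(1 / 2) : ℝ)) volume 0 1 :=
    intervalIntegral.intervalIntegrable_rpow' (by norm_num)
  have hint_pos : IntervalIntegrable (fun s : ℝ => s ^ (1 / 2 : ℝ)) volume 0 1 :=
    intervalIntegral.intervalIntegrable_rpow' (by norm_num)
  have hw : ∫ s in (0 : ℝ)..1, (1 - s) * s ^ (-(1 / 2) : ℝ) = 4 / 3 := by
    rw [← intervalIntegral.integral_congr hsplit, intervalIntegral.integral_sub hint_neg hint_pos,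
      integral_rpow (by norm_num), integral_rpow (by norm_num)]
    norm_num
  have hw_int : IntervalIntegrable (fun s : ℝ => (1 - s) * s ^ (-(1 / 2) : ℝ)) volume 0 1 :=
    hint_neg.continuousOn_mul (by fun_prop)
  simpa only [hw] using eLpNorm_two_le_of_eq_integral_dilation (by fun_prop)
    (fun s hs => sub_nonneg.2 hs.2) hw_int hg''.stronglyMeasurable
    fun h hh => slope_dslope_add_eq_integral_deriv_deriv hg a hh

end DividedDifference

section Estimate

lemma exists_deriv_eq_slope_of_ne {g : ℝ → ℝ} (hg : Differentiable ℝ g) {x y : ℝ} (hxy : x ≠ y) :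
    ∃ z, deriv g z = slope g x y := by
  wlog h : x < y generalizing x y
  · rw [slope_comm]
    exact this hxy.symm (hxy.lt_or_gt.resolve_left h)
  · obtain ⟨z, -, hz⟩ := exists_deriv_eq_slope' g h hg.continuous.continuousOn hg.differentiableOn
    exact ⟨z, hz⟩

lemma enorm_div_one_sub_mul_sq_le {ε c δ : ℝ} (hδ : δ < 1) (hc : ε * c ≤ δ) :
    ‖c / (1 - ε * c) ^ 2‖ₑ ≤ ENNReal.ofReal ((1 - δ) ^ 2)⁻¹ * ‖c‖ₑ := by
  rw [Real.enorm_eq_ofReal_abs, Real.enorm_eq_ofReal_abs, ← ENNReal.ofReal_mul (by positivity),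
    abs_div, abs_sq, div_eq_inv_mul]
  gcongr

variable {ε δ : ℝ} {g : ℝ → ℝ}

lemma lintegral_enorm_slope_div_mul_slope_dslope_le (hg : ContDiff ℝ 2 g) (hδ : δ < 1)
    (hsmall : ∀ x, ε * deriv g x ≤ δ) (ξ : ℝ) :
    ∫⁻ t, ‖slope g ξ t / (1 - ε * slope g ξ t) ^ 2 * slope (dslope g ξ) ξ t‖ₑ ≤
      ENNReal.ofReal (8 / 3 / (1 - δ) ^ 2) * eLpNorm (deriv g) 2 * eLpNorm (deriv (deriv g)) 2 := by
  have hg1 : ContDiff ℝ 1 g := hg.of_le one_le_two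
  have hg_meas : Measurable g := hg.continuous.measurable
  have hslope : Measurable (slope g ξ) := by
    simp only [funext (slope_def_field g ξ)]
    fun_prop
  have hslope' : Measurable (slope (dslope g ξ) ξ) := by
    simp only [funext (slope_dslope_self g ξ)]
    fun_prop
  set K : ℝ := ((1 - δ) ^ 2)⁻¹
  calc ∫⁻ t, ‖slope g ξ t / (1 - ε * slope g ξ t) ^ 2 * slope (dslope g ξ) ξ t‖ₑ
      ≤ ∫⁻ t, ENNReal.ofReal K * (‖slope g ξ t‖ₑ * ‖slope (dslope g ξ) ξ t‖ₑ) := by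
        refine lintegral_mono_ae ?_
        filter_upwards [Measure.ae_ne volume ξ] with t ht
        obtain ⟨z, hz⟩ := exists_deriv_eq_slope_of_ne hg1.differentiable_one ht.symm
        rw [enorm_mul, ← mul_assoc]
        gcongr
        exact enorm_div_one_sub_mul_sq_le hδ (hz ▸ hsmall z)
    _ = ENNReal.ofReal K * ∫⁻ t, ‖slope g ξ t‖ₑ * ‖slope (dslope g ξ) ξ t‖ₑ :=
        lintegral_const_mul _ (by fun_prop)
    _ ≤ ENNReal.ofReal K *
          (eLpNorm (slope g ξ) 2 volume * eLpNorm (slope (dslope g ξ) ξ) 2 volume) := by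
        gcongr
        exact lintegral_enorm_mul_enorm_le_eLpNorm_mul_eLpNorm 2 2
          hslope.aestronglyMeasurable hslope'.aestronglyMeasurable
    _ ≤ ENNReal.ofReal K * ((2 * eLpNorm (deriv g) 2 volume) *
          (ENNReal.ofReal (4 / 3) * eLpNorm (deriv (deriv g)) 2 volume)) := by
        gcongr
        · exact eLpNorm_two_slope_le hg1 ξ
        · exact eLpNorm_two_slope_dslope_le hg ξ
    _ = ENNReal.ofReal (8 / 3 / (1 - δ) ^ 2) * eLpNorm (deriv g) 2 volume *
          eLpNorm (deriv (deriv g)) 2 volume := by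
        rw [show 8 / 3 / (1 - δ) ^ 2 = K * 2 * (4 / 3) by simp only [K]; ring,
          ENNReal.ofReal_mul (by positivity), ENNReal.ofReal_mul (by positivity),
          ENNReal.ofReal_ofNat]
        ring

theorem I1_estimate_general (hg : ContDiff ℝ 2 g) (hδ : δ < 1)
    (hsmall : ∀ x, ε * deriv g x ≤ δ) :
    ∫⁻ ξ, ∫⁻ t,
        ‖(((g ξ - g t) / (ξ - t)) / (1 - ε * ((g ξ - g t) / (ξ - t))) ^ 2) *
          ((deriv g ξ * (ξ - t) - (g ξ - g t)) / (ξ - t) ^ 2) *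
          (deriv (deriv g) ξ) ^ 2‖ₑ ≤
      ENNReal.ofReal (8 / 3 / (1 - δ) ^ 2) * eLpNorm (deriv g) 2 *
        eLpNorm (deriv (deriv g)) 2 ^ 3 := by
  set C := ENNReal.ofReal (8 / 3 / (1 - δ) ^ 2) * eLpNorm (deriv g) 2 *
    eLpNorm (deriv (deriv g)) 2
  simp only [← slope_def_field, ← slope_dslope_self, slope_comm g _ (_ : ℝ)]
  calc _ ≤ ∫⁻ ξ, C * ‖deriv (deriv g) ξ‖ₑ ^ 2 := by
        gcongr with ξ
        simp only [enorm_mul _ (_ ^ 2), enorm_pow]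
        rw [lintegral_mul_const' _ _ (by finiteness)]
        gcongr
        exact lintegral_enorm_slope_div_mul_slope_dslope_le hg hδ hsmall ξ
    _ = C * eLpNorm (deriv (deriv g)) 2 ^ 2 := by
        rw [lintegral_const_mul _ (by fun_prop), eLpNorm_two_sq]
    _ = _ := by ring

end Estimate

theorem I1_estimate (ε : ℝ) (g : ℝ → ℝ)
    (hg : ContDiff ℝ (⊤ : ℕ∞) g)
    (hgL2 : Integrable (fun x => (g x) ^ 2))
    (hg'L2 : Integrable (fun x => (deriv g x) ^ 2))
    (hg''L2 : Integrable (fun x => (deriv (deriv g) x) ^ 2))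
    (hsmall : ∀ x : ℝ, |ε * deriv g x| ≤ 1 / 2) :
    |∫ ξ : ℝ, ∫ t : ℝ,
        (((g ξ - g t) / (ξ - t)) / (1 - ε * ((g ξ - g t) / (ξ - t))) ^ 2) *
          ((deriv g ξ * (ξ - t) - (g ξ - g t)) / (ξ - t) ^ 2) *
          (deriv (deriv g) ξ) ^ 2| ≤
      (32 / 3) * Real.sqrt (∫ x : ℝ, (deriv g x) ^ 2) *
        (Real.sqrt (∫ x : ℝ, (deriv (deriv g) x) ^ 2)) ^ 3 := by
  have h := (enorm_integral_integral_le_lintegral_enorm _).trans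
    (I1_estimate_general (hg.of_le (by decide)) one_half_lt_one fun x => (abs_le.1 (hsmall x)).2)
  rw [eLpNorm_two_eq_ofReal_sqrt (measurable_deriv _).aestronglyMeasurable hg'L2,
    eLpNorm_two_eq_ofReal_sqrt (measurable_deriv _).aestronglyMeasurable hg''L2,
    ← ENNReal.ofReal_pow (by positivity), ← ENNReal.ofReal_mul (by positivity),
    ← ENNReal.ofReal_mul (by positivity), Real.enorm_eq_ofReal_abs,
    ENNReal.ofReal_le_ofReal_iff (by positivity)] at h
  convert h using 3
  norm_num
end

section
/- Let g(t, ·) : ℝ → ℝ be a smooth rapidly decaying solution of the equation g_t(ξ) = H[g](ξ) - (ε²/π) ∂_ξ ∫_ℝ (ξ - ξ̃) g_ξ̃(ξ̃) φ((g(ξ)-g(ξ̃))/(ξ-ξ̃); ε) dξ̃, where H is the Hilbert transform and φ(c;ε) = -(1/ε²)(log(1-εc)+εc), with ‖ε g_ξ(t,·)‖_{L∞} ≤ 1/2 on a time interval. Then the L² norm ∫_ℝ g(t,ξ)² dξ is constant in t. -/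
open MeasureTheory Filter

/-- `h` is the Hilbert transform of `u`, defined pointwise as a principal value. -/
def IsHilbertTransform (u h : ℝ → ℝ) : Prop :=
  ∀ x : ℝ,
    Tendsto (fun δ : ℝ => (1 / Real.pi) * ∫ y in {y : ℝ | δ < |x - y|}, u y / (x - y))
      (nhdsWithin 0 (Set.Ioi 0)) (nhds (h x))

/-! Rescaling `f = ε g` removes `ε` from the equation. Write `q` for the difference quotient of `f`
between `x - z` and `x`. Integrating `f'` by parts, the nonlinear potential becomes
`∫ z k(q) dz` with `k(c) = (2 - c) log (1 - c) + 2 c`, and its derivative is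
`∫ k'(q) (f'(x) - f'(x - z)) dz`. Tested against `f`, the antisymmetry under exchanging `x` and
`x - z` replaces `f(x)` by half of `f(x) - f(x - z) = z q`, so that the integrand is
`z² q k'(q) ∂ₓq / 2`, a total derivative in `x`, and its integral vanishes. The Hilbert transform
contributes nothing by skew-symmetry.

The equation is only known pointwise in `x`, with no uniformity in time, so the energy cannot be
differentiated directly.
* Testing with a Lorentzian cutoff of scale `R` gives error terms that are bounded by the energy
  and vanish as `R → ∞`; hence the energy is conserved on every interval on which it is bounded.
  A bound on the energy also bounds `f` uniformly, because `f` is Lipschitz.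
* By Fatou the energy is lower semicontinuous in time. Consider the closed set of times near which
  it is not constant. If it is nonempty, the energy is bounded on a relatively open part of it by
  Baire's theorem, and each nearby time has the energy of some point of that part. So the energy
  is bounded, hence constant, near a point of the set, a contradiction.
-/

section ScalarFunctions

/-- The nonlinearity `-ε² φ(c / ε; ε)` of the equation, which no longer depends on `ε`. -/
noncomputable def logRemainder (c : ℝ) : ℝ := Real.log (1 - c) + c

/-- The primitive of `logRemainder` vanishing at `0`. -/
noncomputable def logRemainderPrimitive (c : ℝ) : ℝ :=
  -(1 - c) * Real.log (1 - c) - c + c ^ 2 / 2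

/-- The kernel of the nonlinear potential once the derivative `f'` has been integrated by parts
away, see `integral_mul_deriv_mul_logRemainder`. -/
noncomputable def potentialKernel (c : ℝ) : ℝ := (2 - c) * Real.log (1 - c) + 2 * c

/-- The derivative of `potentialKernel`. -/
noncomputable def potentialKernelDeriv (c : ℝ) : ℝ := -Real.log (1 - c) - c / (1 - c)

/-- The primitive of `c * potentialKernelDeriv c` vanishing at `0`. -/
noncomputable def potentialKernelMoment (c : ℝ) : ℝ :=
  (3 / 2 - c ^ 2 / 2) * Real.log (1 - c) + 3 * c / 2 + 3 * c ^ 2 / 4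

lemma potentialKernel_eq (c : ℝ) :
    potentialKernel c = c * logRemainder c - 2 * logRemainderPrimitive c := by
  simp only [potentialKernel, logRemainder, logRemainderPrimitive]
  ring

@[fun_prop]
lemma measurable_logRemainder : Measurable logRemainder := by
  unfold logRemainder; fun_prop

@[fun_prop]
lemma measurable_potentialKernel : Measurable potentialKernel := by
  unfold potentialKernel; fun_prop

@[fun_prop]
lemma measurable_potentialKernelDeriv : Measurable potentialKernelDeriv := by
  unfold potentialKernelDeriv; fun_prop

@[fun_prop]
lemma measurable_potentialKernelMoment : Measurable potentialKernelMoment := by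
  unfold potentialKernelMoment; fun_prop

variable {c : ℝ}

lemma hasDerivAt_log_one_sub (hc : c < 1) :
    HasDerivAt (fun c => Real.log (1 - c)) (-1 / (1 - c)) c :=
  ((hasDerivAt_id c).const_sub 1).log (sub_pos.2 hc).ne'

lemma hasDerivAt_logRemainder (hc : c < 1) : HasDerivAt logRemainder (-c / (1 - c)) c := by
  refine ((hasDerivAt_log_one_sub hc).add (hasDerivAt_id c)).congr_deriv ?_
  have : 1 - c ≠ 0 := (sub_pos.2 hc).ne'
  field_simp
  ring

lemma hasDerivAt_logRemainderPrimitive (hc : c < 1) :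
    HasDerivAt logRemainderPrimitive (logRemainder c) c := by
  refine ((((hasDerivAt_id c).const_sub 1).neg.mul (hasDerivAt_log_one_sub hc)).sub
    (hasDerivAt_id c) |>.add (((hasDerivAt_id c).pow 2).div_const 2)).congr_deriv ?_
  have : 1 - c ≠ 0 := (sub_pos.2 hc).ne'
  simp only [logRemainder, id, Pi.neg_apply]
  field_simp
  push_cast
  ring

lemma hasDerivAt_potentialKernel (hc : c < 1) :
    HasDerivAt potentialKernel (potentialKernelDeriv c) c := by
  refine ((((hasDerivAt_id c).const_sub 2).mul (hasDerivAt_log_one_sub hc)).add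
    ((hasDerivAt_id c).const_mul 2)).congr_deriv ?_
  have : 1 - c ≠ 0 := (sub_pos.2 hc).ne'
  simp only [potentialKernelDeriv, id]
  field_simp
  ring

lemma hasDerivAt_potentialKernelDeriv (hc : c < 1) :
    HasDerivAt potentialKernelDeriv (-c / (1 - c) ^ 2) c := by
  have h0 : 1 - c ≠ 0 := (sub_pos.2 hc).ne'
  refine ((hasDerivAt_log_one_sub hc).neg.sub
    ((hasDerivAt_id c).div ((hasDerivAt_id c).const_sub 1) h0)).congr_deriv ?_
  simp only [id]
  field_simp
  ring

lemma hasDerivAt_potentialKernelMoment (hc : c < 1) :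
    HasDerivAt potentialKernelMoment (c * potentialKernelDeriv c) c := by
  have h0 : 1 - c ≠ 0 := (sub_pos.2 hc).ne'
  refine (((((((hasDerivAt_id c).pow 2).div_const 2).const_sub (3 / 2)).mul
    (hasDerivAt_log_one_sub hc)).add (((hasDerivAt_id c).const_mul 3).div_const 2)).add
    ((((hasDerivAt_id c).pow 2).const_mul 3).div_const 4)).congr_deriv ?_
  simp only [potentialKernelDeriv, id, Pi.pow_apply]
  field_simp
  push_cast
  ring

lemma abs_le_mul_pow_succ_of_hasDerivAt {F F' : ℝ → ℝ} {K r : ℝ} {n : ℕ} (hF0 : F 0 = 0)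
    (hF : ∀ t, |t| ≤ r → HasDerivAt F (F' t) t) (hF' : ∀ t, |t| ≤ r → |F' t| ≤ K * |t| ^ n)
    (hK : 0 ≤ K) (hc : |c| ≤ r) : |F c| ≤ K * |c| ^ (n + 1) := by
  have mean_value := (convex_Icc (-|c|) |c|).norm_image_sub_le_of_norm_hasDerivWithin_le
    (f := F) (f' := F') (C := K * |c| ^ n) (x := 0) (y := c)
    (fun t ht => (hF t ((abs_le.2 ht).trans hc)).hasDerivWithinAt)
    (fun t ht => (hF' t ((abs_le.2 ht).trans hc)).trans <| mul_le_mul_of_nonneg_left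
      (pow_le_pow_left₀ (abs_nonneg t) (abs_le.2 ht) n) hK)
    ⟨by simp, by simp⟩ ⟨neg_abs_le c, le_abs_self c⟩
  simpa only [hF0, sub_zero, Real.norm_eq_abs, mul_assoc, ← pow_succ] using mean_value

lemma lt_one_of_abs_le_half (hc : |c| ≤ 1 / 2) : c < 1 := by
  linarith [le_abs_self c]

lemma abs_logRemainder_le (hc : |c| ≤ 1 / 2) : |logRemainder c| ≤ 4 * |c| ^ 2 := by
  refine abs_le_mul_pow_succ_of_hasDerivAt (n := 1) (by simp [logRemainder])
    (fun t ht => hasDerivAt_logRemainder (lt_one_of_abs_le_half ht)) (fun t ht => ?_)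
    (by norm_num) hc
  have : 1 / 2 ≤ 1 - t := by linarith [le_abs_self t]
  rw [abs_div, abs_neg, abs_of_pos (by linarith : 0 < 1 - t), div_le_iff₀ (by linarith), pow_one]
  nlinarith [abs_nonneg t]

lemma abs_logRemainderPrimitive_le (hc : |c| ≤ 1 / 2) :
    |logRemainderPrimitive c| ≤ 4 * |c| ^ 3 :=
  abs_le_mul_pow_succ_of_hasDerivAt (by simp [logRemainderPrimitive])
    (fun _ ht => hasDerivAt_logRemainderPrimitive (lt_one_of_abs_le_half ht))
    (fun _ => abs_logRemainder_le) (by norm_num) hc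

lemma abs_potentialKernelDeriv_le (hc : |c| ≤ 1 / 2) :
    |potentialKernelDeriv c| ≤ 4 * |c| ^ 2 := by
  refine abs_le_mul_pow_succ_of_hasDerivAt (n := 1) (by simp [potentialKernelDeriv])
    (fun t ht => hasDerivAt_potentialKernelDeriv (lt_one_of_abs_le_half ht)) (fun t ht => ?_)
    (by norm_num) hc
  have : 1 / 2 ≤ 1 - t := by linarith [le_abs_self t]
  have : (1 / 2) ^ 2 ≤ (1 - t) ^ 2 := by gcongr
  rw [abs_div, abs_neg, abs_of_pos (by linarith : 0 < (1 - t) ^ 2),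
    div_le_iff₀ (by linarith), pow_one]
  nlinarith [abs_nonneg t]

lemma abs_potentialKernel_le (hc : |c| ≤ 1 / 2) : |potentialKernel c| ≤ 4 * |c| ^ 3 :=
  abs_le_mul_pow_succ_of_hasDerivAt (by simp [potentialKernel])
    (fun _ ht => hasDerivAt_potentialKernel (lt_one_of_abs_le_half ht))
    (fun _ => abs_potentialKernelDeriv_le) (by norm_num) hc

lemma abs_potentialKernelMoment_le (hc : |c| ≤ 1 / 2) :
    |potentialKernelMoment c| ≤ 4 * |c| ^ 4 := by
  refine abs_le_mul_pow_succ_of_hasDerivAt (by simp [potentialKernelMoment])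
    (fun _ ht => hasDerivAt_potentialKernelMoment (lt_one_of_abs_le_half ht)) (fun t ht => ?_)
    (by norm_num) hc
  rw [abs_mul, pow_succ', mul_left_comm]
  exact mul_le_mul_of_nonneg_left (abs_potentialKernelDeriv_le ht) (abs_nonneg t)

end ScalarFunctions

section DiffQuot

/-- The difference quotient of `f` between `x - z` and `x`, with junk value `0` at `z = 0`. -/
noncomputable def diffQuot (f : ℝ → ℝ) (x z : ℝ) : ℝ := (f x - f (x - z)) / z

variable {f : ℝ → ℝ}

lemma mul_diffQuot (f : ℝ → ℝ) (x z : ℝ) : z * diffQuot f x z = f x - f (x - z) := by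
  rcases eq_or_ne z 0 with rfl | hz
  · simp
  · rw [diffQuot, mul_div_cancel₀ _ hz]

lemma abs_mul_abs_diffQuot (f : ℝ → ℝ) (x z : ℝ) :
    |z| * |diffQuot f x z| = |f x - f (x - z)| := by
  rw [← abs_mul, mul_diffQuot]

lemma diffQuot_sub_neg (f : ℝ → ℝ) (x z : ℝ) : diffQuot f (x - z) (-z) = diffQuot f x z := by
  simp only [diffQuot, sub_neg_eq_add, sub_add_cancel]
  rw [← neg_sub, neg_div_neg_eq]

lemma measurable_diffQuot (hf : Measurable f) :
    Measurable fun p : ℝ × ℝ => diffQuot f p.1 p.2 := by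
  unfold diffQuot; fun_prop

lemma measurable_diffQuot_left (hf : Measurable f) (z : ℝ) :
    Measurable fun x => diffQuot f x z :=
  (measurable_diffQuot hf).comp measurable_prodMk_right

lemma measurable_diffQuot_right (hf : Measurable f) (x : ℝ) : Measurable (diffQuot f x) :=
  (measurable_diffQuot hf).comp measurable_prodMk_left

lemma hasDerivAt_diffQuot_left (hf : Differentiable ℝ f) (x z : ℝ) :
    HasDerivAt (fun x => diffQuot f x z) ((deriv f x - deriv f (x - z)) / z) x :=
  ((hf x).hasDerivAt.sub ((hf (x - z)).hasDerivAt.comp_sub_const x z)).div_const z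

lemma hasDerivAt_diffQuot_right (hf : Differentiable ℝ f) (x : ℝ) {z : ℝ} (hz : z ≠ 0) :
    HasDerivAt (diffQuot f x) ((deriv f (x - z) - diffQuot f x z) / z) z := by
  refine ((((hf (x - z)).hasDerivAt.comp_const_sub x z).const_sub (f x)).div
    (hasDerivAt_id z) hz).congr_deriv ?_
  simp only [diffQuot, id]
  field_simp

end DiffQuot

/-- The solution at a fixed time, rescaled by `ε`: an integrable function with values in `[-S, S]`
and slopes in `[-1/2, 1/2]`. -/
structure IsProfile (f : ℝ → ℝ) (S : ℝ) : Prop where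
  contDiff : ContDiff ℝ 1 f
  abs_deriv_le : ∀ x, |deriv f x| ≤ 1 / 2
  abs_le : ∀ x, |f x| ≤ S
  integrable : Integrable f
  integrable_deriv : Integrable (deriv f)

/-- The nonlinear potential `∫ (x - y) f'(y) logRemainder ((f x - f y) / (x - y)) dy`, with the
derivative `f'` integrated by parts away. -/
noncomputable def potential (f : ℝ → ℝ) (x : ℝ) : ℝ :=
  ∫ z, z * potentialKernel (diffQuot f x z)

/-- The derivative in `x` of the integrand of `potential f x`. -/
noncomputable def potentialDerivIntegrand (f : ℝ → ℝ) (x z : ℝ) : ℝ :=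
  potentialKernelDeriv (diffQuot f x z) * (deriv f x - deriv f (x - z))

/-- The derivative of `potential f`. -/
noncomputable def potentialDeriv (f : ℝ → ℝ) (x : ℝ) : ℝ := ∫ z, potentialDerivIntegrand f x z

lemma potentialDerivIntegrand_sub_neg (f : ℝ → ℝ) (x z : ℝ) :
    potentialDerivIntegrand f (x - z) (-z) = -potentialDerivIntegrand f x z := by
  simp only [potentialDerivIntegrand, diffQuot_sub_neg, sub_neg_eq_add, sub_add_cancel]
  ring

lemma abs_sub_le_of_abs_deriv_le {f : ℝ → ℝ} {K : ℝ} (hf : Differentiable ℝ f)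
    (hK : ∀ x, |deriv f x| ≤ K) (a b : ℝ) : |f a - f b| ≤ K * |a - b| :=
  convex_univ.norm_image_sub_le_of_norm_deriv_le (fun x _ => hf x) (fun x _ => hK x)
    (Set.mem_univ b) (Set.mem_univ a)

namespace IsProfile

variable {f : ℝ → ℝ} {S : ℝ}

lemma differentiable (hf : IsProfile f S) : Differentiable ℝ f :=
  hf.contDiff.differentiable one_ne_zero

lemma measurable (hf : IsProfile f S) : Measurable f := hf.contDiff.continuous.measurable

lemma nonneg (hf : IsProfile f S) : 0 ≤ S := (abs_nonneg _).trans (hf.abs_le 0)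

lemma abs_sub_le (hf : IsProfile f S) (a b : ℝ) : |f a - f b| ≤ 1 / 2 * |a - b| :=
  abs_sub_le_of_abs_deriv_le hf.differentiable hf.abs_deriv_le a b

lemma abs_sub_le_two_mul (hf : IsProfile f S) (a b : ℝ) : |f a - f b| ≤ 2 * S := by
  linarith [abs_sub (f a) (f b), hf.abs_le a, hf.abs_le b]

lemma abs_deriv_sub_le (hf : IsProfile f S) (a b : ℝ) : |deriv f a - deriv f b| ≤ 1 := by
  linarith [abs_sub (deriv f a) (deriv f b), hf.abs_deriv_le a, hf.abs_deriv_le b]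

lemma integrable_sq (hf : IsProfile f S) : Integrable fun x => f x ^ 2 := by
  simpa only [sq] using
    hf.integrable.bdd_mul (c := S) hf.measurable.aestronglyMeasurable (.of_forall hf.abs_le)

lemma abs_diffQuot_le (hf : IsProfile f S) (x z : ℝ) : |diffQuot f x z| ≤ 1 / 2 := by
  rcases eq_or_ne z 0 with rfl | hz
  · simp [diffQuot]
  · rw [diffQuot, abs_div, div_le_iff₀ (abs_pos.2 hz)]
    simpa using hf.abs_sub_le x (x - z)

lemma sq_diffQuot_le (hf : IsProfile f S) (x z : ℝ) :
    |diffQuot f x z| ^ 2 ≤ (1 + 4 * S ^ 2) * (1 + z ^ 2)⁻¹ := by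
  rw [← div_eq_mul_inv, le_div_iff₀ (by positivity)]
  have slope_bound : |diffQuot f x z| ^ 2 ≤ (1 / 2) ^ 2 :=
    pow_le_pow_left₀ (abs_nonneg _) (hf.abs_diffQuot_le x z) 2
  have sup_bound : (|z| * |diffQuot f x z|) ^ 2 ≤ (2 * S) ^ 2 := by
    rw [abs_mul_abs_diffQuot]
    exact pow_le_pow_left₀ (abs_nonneg _) (hf.abs_sub_le_two_mul _ _) 2
  nlinarith [sq_abs z]

lemma abs_mul_potentialKernel_le (hf : IsProfile f S) (x z : ℝ) :
    |z * potentialKernel (diffQuot f x z)|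
      ≤ 4 * |f x - f (x - z)| * |diffQuot f x z| ^ 2 := by
  rw [abs_mul, ← abs_mul_abs_diffQuot]
  calc |z| * |potentialKernel (diffQuot f x z)| ≤ |z| * (4 * |diffQuot f x z| ^ 3) := by
        gcongr; exact abs_potentialKernel_le (hf.abs_diffQuot_le x z)
    _ = 4 * (|z| * |diffQuot f x z|) * |diffQuot f x z| ^ 2 := by ring

lemma abs_mul_potentialKernel_le_inv (hf : IsProfile f S) (x z : ℝ) :
    |z * potentialKernel (diffQuot f x z)| ≤ 8 * S * (1 + 4 * S ^ 2) * (1 + z ^ 2)⁻¹ := by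
  have := hf.nonneg
  calc _ ≤ 4 * |f x - f (x - z)| * |diffQuot f x z| ^ 2 := hf.abs_mul_potentialKernel_le x z
    _ ≤ 4 * (2 * S) * ((1 + 4 * S ^ 2) * (1 + z ^ 2)⁻¹) := by
        gcongr
        exacts [hf.abs_sub_le_two_mul _ _, hf.sq_diffQuot_le x z]
    _ = _ := by ring

lemma abs_potentialDerivIntegrand_le (hf : IsProfile f S) (x z : ℝ) :
    |potentialDerivIntegrand f x z| ≤ 4 * (1 + 4 * S ^ 2) * (1 + z ^ 2)⁻¹ := by
  rw [potentialDerivIntegrand, abs_mul]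
  calc _ ≤ 4 * |diffQuot f x z| ^ 2 * 1 := by
        gcongr
        exacts [abs_potentialKernelDeriv_le (hf.abs_diffQuot_le x z), hf.abs_deriv_sub_le _ _]
    _ ≤ 4 * (1 + 4 * S ^ 2) * (1 + z ^ 2)⁻¹ := by linarith [hf.sq_diffQuot_le x z]

lemma measurable_potentialDerivIntegrand (hf : IsProfile f S) :
    Measurable fun p : ℝ × ℝ => potentialDerivIntegrand f p.1 p.2 := by
  have := measurable_diffQuot hf.measurable
  have := measurable_deriv f
  unfold potentialDerivIntegrand
  fun_prop

lemma integrable_mul_potentialKernel (hf : IsProfile f S) (x : ℝ) :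
    Integrable fun z => z * potentialKernel (diffQuot f x z) := by
  have := measurable_diffQuot_right hf.measurable x
  exact (integrable_inv_one_add_sq.const_mul _).mono' (by fun_prop)
    (.of_forall (hf.abs_mul_potentialKernel_le_inv x))

lemma integrable_mul_deriv_mul_logRemainder (hf : IsProfile f S) (x : ℝ) :
    Integrable fun z => z * deriv f (x - z) * logRemainder (diffQuot f x z) := by
  have := hf.nonneg
  have := measurable_diffQuot_right hf.measurable x
  have := measurable_deriv f
  refine ((hf.integrable_deriv.abs.comp_sub_left x).const_mul (4 * S)).mono' (by fun_prop)
    (.of_forall fun z => ?_)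
  calc |z * deriv f (x - z) * logRemainder (diffQuot f x z)|
      ≤ |z| * |deriv f (x - z)| * (4 * |diffQuot f x z| ^ 2) := by
        rw [abs_mul, abs_mul]
        gcongr
        exact abs_logRemainder_le (hf.abs_diffQuot_le x z)
    _ = 4 * |deriv f (x - z)| * ((|z| * |diffQuot f x z|) * |diffQuot f x z|) := by ring
    _ ≤ 4 * |deriv f (x - z)| * ((2 * S) * (1 / 2)) := by
        rw [abs_mul_abs_diffQuot]
        gcongr
        exacts [hf.abs_sub_le_two_mul _ _, hf.abs_diffQuot_le x z]
    _ = 4 * S * |deriv f (x - z)| := by ring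

lemma hasDerivAt_sq_mul_logRemainderPrimitive_zero (hf : IsProfile f S) (x : ℝ) :
    HasDerivAt (fun z => z ^ 2 * logRemainderPrimitive (diffQuot f x z)) 0 0 := by
  have quadratic : (fun z => z ^ 2 * logRemainderPrimitive (diffQuot f x z))
      =O[nhds 0] fun z => z ^ 2 := by
    refine .of_bound 1 (.of_forall fun z => ?_)
    rw [norm_mul, one_mul]
    refine mul_le_of_le_one_right (norm_nonneg _) ?_
    calc |logRemainderPrimitive (diffQuot f x z)| ≤ 4 * |diffQuot f x z| ^ 3 :=
          abs_logRemainderPrimitive_le (hf.abs_diffQuot_le x z)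
      _ ≤ 4 * (1 / 2) ^ 3 := by gcongr; exact hf.abs_diffQuot_le x z
      _ ≤ 1 := by norm_num
  rw [hasDerivAt_iff_isLittleO]
  simpa using quadratic.trans_isLittleO (Asymptotics.isLittleO_pow_id (𝕜 := ℝ) one_lt_two)

lemma hasDerivAt_sq_mul_logRemainderPrimitive (hf : IsProfile f S) (x z : ℝ) :
    HasDerivAt (fun z => z ^ 2 * logRemainderPrimitive (diffQuot f x z))
      (z * deriv f (x - z) * logRemainder (diffQuot f x z)
        - z * potentialKernel (diffQuot f x z)) z := by
  rcases eq_or_ne z 0 with rfl | hz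
  · simpa only [zero_mul, sub_zero] using hf.hasDerivAt_sq_mul_logRemainderPrimitive_zero x
  · have hq := lt_one_of_abs_le_half (hf.abs_diffQuot_le x z)
    refine (((hasDerivAt_id z).pow 2).mul ((hasDerivAt_logRemainderPrimitive hq).comp z
      (hasDerivAt_diffQuot_right hf.differentiable x hz))).congr_deriv ?_
    simp only [potentialKernel_eq, Function.comp_apply, Pi.pow_apply, id]
    field_simp
    push_cast
    ring

lemma tendsto_sq_mul_logRemainderPrimitive (hf : IsProfile f S) (x : ℝ) :
    Tendsto (fun z => z ^ 2 * logRemainderPrimitive (diffQuot f x z))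
      (Bornology.cobounded ℝ) (nhds 0) := by
  have decay : Tendsto (fun z : ℝ => 32 * S ^ 3 * ‖z‖⁻¹) (Bornology.cobounded ℝ) (nhds 0) := by
    simpa using
      (tendsto_norm_cobounded_atTop (E := ℝ)).inv_tendsto_atTop.const_mul (32 * S ^ 3)
  refine squeeze_zero_norm (fun z => ?_) decay
  rcases eq_or_ne z 0 with rfl | hz
  · simp
  rw [norm_mul, norm_pow, Real.norm_eq_abs, Real.norm_eq_abs, ← div_eq_mul_inv,
    le_div_iff₀ (abs_pos.2 hz)]
  calc |z| ^ 2 * |logRemainderPrimitive (diffQuot f x z)| * |z|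
      ≤ |z| ^ 2 * (4 * |diffQuot f x z| ^ 3) * |z| := by
        gcongr; exact abs_logRemainderPrimitive_le (hf.abs_diffQuot_le x z)
    _ = 4 * (|z| * |diffQuot f x z|) ^ 3 := by ring
    _ ≤ 4 * (2 * S) ^ 3 := by
        rw [abs_mul_abs_diffQuot]
        gcongr
        exact hf.abs_sub_le_two_mul _ _
    _ = 32 * S ^ 3 := by ring

lemma integral_mul_deriv_mul_logRemainder (hf : IsProfile f S) (x : ℝ) :
    ∫ y, (x - y) * deriv f y * logRemainder ((f x - f y) / (x - y)) = potential f x := by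
  have hφ := hf.integrable_mul_deriv_mul_logRemainder x
  have hm := hf.integrable_mul_potentialKernel x
  have htop := hf.tendsto_sq_mul_logRemainderPrimitive x
  rw [IsOrderBornology.cobounded_eq, tendsto_sup] at htop
  have by_parts := integral_of_hasDerivAt_of_tendsto
    (hf.hasDerivAt_sq_mul_logRemainderPrimitive x) (hφ.sub hm) htop.1 htop.2
  rw [integral_sub hφ hm, sub_self, sub_eq_zero] at by_parts
  rw [potential, ← by_parts, ← integral_sub_left_eq_self _ volume x]
  simp only [sub_sub_cancel, diffQuot]

lemma hasDerivAt_potential (hf : IsProfile f S) (x : ℝ) :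
    HasDerivAt (potential f) (potentialDeriv f x) x := by
  have hderiv (x z : ℝ) : HasDerivAt (fun x => z * potentialKernel (diffQuot f x z))
      (potentialDerivIntegrand f x z) x := by
    have hq := lt_one_of_abs_le_half (hf.abs_diffQuot_le x z)
    refine (((hasDerivAt_potentialKernel hq).comp x
      (hasDerivAt_diffQuot_left hf.differentiable x z)).const_mul z).congr_deriv ?_
    rcases eq_or_ne z 0 with rfl | hz
    · simp [potentialDerivIntegrand, diffQuot, potentialKernelDeriv]
    · rw [potentialDerivIntegrand]
      field_simp
  exact (hasDerivAt_integral_of_dominated_loc_of_deriv_le univ_mem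
    (.of_forall fun x => (hf.integrable_mul_potentialKernel x).aestronglyMeasurable)
    (hf.integrable_mul_potentialKernel x)
    (hf.measurable_potentialDerivIntegrand.comp measurable_prodMk_left).aestronglyMeasurable
    (.of_forall fun z x _ => hf.abs_potentialDerivIntegrand_le x z)
    (integrable_inv_one_add_sq.const_mul _) (.of_forall fun z x _ => hderiv x z)).2

lemma abs_potentialDeriv_le (hf : IsProfile f S) (x : ℝ) :
    |potentialDeriv f x| ≤ 4 * (1 + 4 * S ^ 2) * Real.pi := by
  rw [potentialDeriv, ← Real.norm_eq_abs, ← integral_univ_inv_one_add_sq, ← integral_const_mul]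
  exact norm_integral_le_of_norm_le (integrable_inv_one_add_sq.const_mul _)
    (.of_forall (hf.abs_potentialDerivIntegrand_le x))

lemma measurable_potentialDeriv (hf : IsProfile f S) : Measurable (potentialDeriv f) :=
  hf.measurable_potentialDerivIntegrand.stronglyMeasurable.integral_prod_right'.measurable

end IsProfile

/-- A bounded `C¹` weight with bounded derivative, against which the equation is tested. -/
structure IsWeight (w : ℝ → ℝ) : Prop where
  contDiff : ContDiff ℝ 1 w
  abs_le_one : ∀ x, |w x| ≤ 1
  abs_deriv_le_one : ∀ x, |deriv w x| ≤ 1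

namespace IsWeight

variable {w : ℝ → ℝ}

lemma one : IsWeight fun _ => 1 where
  contDiff := contDiff_const
  abs_le_one := by simp
  abs_deriv_le_one := by simp

lemma differentiable (hw : IsWeight w) : Differentiable ℝ w :=
  hw.contDiff.differentiable one_ne_zero

lemma measurable (hw : IsWeight w) : Measurable w := hw.contDiff.continuous.measurable

lemma abs_sub_le (hw : IsWeight w) (a b : ℝ) : |w a - w b| ≤ |a - b| := by
  simpa using abs_sub_le_of_abs_deriv_le hw.differentiable hw.abs_deriv_le_one a b

lemma abs_sub_le_two (hw : IsWeight w) (a b : ℝ) : |w a - w b| ≤ 2 := by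
  linarith [abs_sub (w a) (w b), hw.abs_le_one a, hw.abs_le_one b]

lemma abs_deriv_sub_le_two (hw : IsWeight w) (a b : ℝ) : |deriv w a - deriv w b| ≤ 2 := by
  linarith [abs_sub (deriv w a) (deriv w b), hw.abs_deriv_le_one a, hw.abs_deriv_le_one b]

lemma integrable_mul {u : ℝ → ℝ} (hw : IsWeight w) (hu : Integrable u) :
    Integrable fun x => w x * u x :=
  hu.bdd_mul hw.measurable.aestronglyMeasurable (.of_forall hw.abs_le_one)

end IsWeight

section NonlinearEnergy

variable {f u w : ℝ → ℝ} {S : ℝ}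

lemma integrable_mul_potentialDerivIntegrand (hf : IsProfile f S) (hu : Integrable u) :
    Integrable (fun p : ℝ × ℝ => u p.1 * potentialDerivIntegrand f p.1 p.2)
      (volume.prod volume) := by
  refine (hu.norm.mul_prod (integrable_inv_one_add_sq.const_mul (4 * (1 + 4 * S ^ 2)))).mono'
    (hu.aestronglyMeasurable.comp_fst.mul
      hf.measurable_potentialDerivIntegrand.aestronglyMeasurable) (.of_forall fun p => ?_)
  rw [norm_mul]
  exact mul_le_mul_of_nonneg_left (hf.abs_potentialDerivIntegrand_le _ _) (norm_nonneg _)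

lemma integrable_mul_potentialDerivIntegrand_left (hf : IsProfile f S) (hu : Integrable u)
    (z : ℝ) : Integrable fun x => u x * potentialDerivIntegrand f x z :=
  hu.mul_bdd (hf.measurable_potentialDerivIntegrand.comp
    measurable_prodMk_right).aestronglyMeasurable
    (.of_forall fun x => hf.abs_potentialDerivIntegrand_le x z)

lemma integrable_sub_mul_potentialDerivIntegrand (hf : IsProfile f S) (hu : Integrable u)
    (z : ℝ) : Integrable fun x => (u x - u (x - z)) * potentialDerivIntegrand f x z :=
  integrable_mul_potentialDerivIntegrand_left hf (hu.sub (hu.comp_sub_right z)) z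

lemma integral_mul_potentialDerivIntegrand_neg (f u : ℝ → ℝ) (z : ℝ) :
    ∫ x, u x * potentialDerivIntegrand f x (-z)
      = -∫ x, u (x - z) * potentialDerivIntegrand f x z := by
  rw [← integral_sub_right_eq_self _ z, ← integral_neg]
  simp only [potentialDerivIntegrand_sub_neg, mul_neg]

/-- The exchange `(x, x - z) ↦ (x - z, x)` changes the sign of the integrand, which leaves a
difference of `u`. -/
lemma integral_mul_potentialDeriv (hf : IsProfile f S) (hu : Integrable u) :
    ∫ x, u x * potentialDeriv f x
      = 1 / 2 * ∫ z, ∫ x, (u x - u (x - z)) * potentialDerivIntegrand f x z := by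
  have hprod := integrable_mul_potentialDerivIntegrand hf hu
  have hflux : Integrable fun z => ∫ x, u x * potentialDerivIntegrand f x z :=
    hprod.integral_prod_right
  have fubini : ∫ x, u x * potentialDeriv f x
      = ∫ z, ∫ x, u x * potentialDerivIntegrand f x z := by
    simp only [potentialDeriv, ← integral_const_mul]
    exact integral_integral_swap hprod
  have symm (z : ℝ) : ∫ x, (u x - u (x - z)) * potentialDerivIntegrand f x z
      = (∫ x, u x * potentialDerivIntegrand f x z)
        + ∫ x, u x * potentialDerivIntegrand f x (-z) := by
    simp only [sub_mul]
    rw [integral_sub (integrable_mul_potentialDerivIntegrand_left hf hu z)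
      (integrable_mul_potentialDerivIntegrand_left hf (hu.comp_sub_right z) z),
      integral_mul_potentialDerivIntegrand_neg, sub_eq_add_neg]
  simp only [symm]
  rw [integral_add hflux hflux.comp_neg,
    integral_neg_eq_self fun z => ∫ x, u x * potentialDerivIntegrand f x z, ← fubini]
  ring

/-- A function of `x` whose derivative is the symmetrized integrand of
`integral_mul_potentialDeriv` for `u = w f`, up to `energyRemainder w f x z`. -/
noncomputable def energyPrimitive (w f : ℝ → ℝ) (x z : ℝ) : ℝ :=
  w x * (z ^ 2 * potentialKernelMoment (diffQuot f x z))
    + (w x - w (x - z)) * f (x - z) * (z * potentialKernel (diffQuot f x z))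

/-- The part of the derivative of `energyPrimitive w f` in which a difference or a derivative
falls on the weight `w`. -/
noncomputable def energyRemainder (w f : ℝ → ℝ) (x z : ℝ) : ℝ :=
  deriv w x * (z ^ 2 * potentialKernelMoment (diffQuot f x z))
    + ((deriv w x - deriv w (x - z)) * f (x - z) + (w x - w (x - z)) * deriv f (x - z))
      * (z * potentialKernel (diffQuot f x z))

lemma energyRemainder_one (f : ℝ → ℝ) (x z : ℝ) : energyRemainder (fun _ => 1) f x z = 0 := by
  simp [energyRemainder]

lemma hasDerivAt_energyPrimitive (hf : IsProfile f S) (hw : IsWeight w) (x z : ℝ) :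
    HasDerivAt (fun x => energyPrimitive w f x z)
      ((w x * f x - w (x - z) * f (x - z)) * potentialDerivIntegrand f x z
        + energyRemainder w f x z) x := by
  have hq := lt_one_of_abs_le_half (hf.abs_diffQuot_le x z)
  have dq := hasDerivAt_diffQuot_left hf.differentiable x z
  have dw := (hw.differentiable x).hasDerivAt
  have dΔw := dw.sub ((hw.differentiable (x - z)).hasDerivAt.comp_sub_const x z)
  have df := (hf.differentiable (x - z)).hasDerivAt.comp_sub_const x z
  refine ((dw.mul (((hasDerivAt_potentialKernelMoment hq).comp x dq).const_mul (z ^ 2))).add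
    ((dΔw.mul df).mul (((hasDerivAt_potentialKernel hq).comp x dq).const_mul z))).congr_deriv ?_
  rcases eq_or_ne z 0 with rfl | hz
  · simp [energyRemainder]
  · have hfx : f x = f (x - z) + z * diffQuot f x z := by rw [mul_diffQuot]; ring
    simp only [energyRemainder, potentialDerivIntegrand, Function.comp_apply, Pi.mul_apply,
      Pi.sub_apply, hfx]
    field_simp
    ring

lemma abs_sq_mul_potentialKernelMoment_le (hf : IsProfile f S) (x z : ℝ) :
    |z ^ 2 * potentialKernelMoment (diffQuot f x z)|
      ≤ 8 * (1 + 4 * S ^ 2) * (1 + z ^ 2)⁻¹ * (f x ^ 2 + f (x - z) ^ 2) := by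
  rw [abs_mul, abs_pow]
  calc |z| ^ 2 * |potentialKernelMoment (diffQuot f x z)|
      ≤ |z| ^ 2 * (4 * |diffQuot f x z| ^ 4) := by
        gcongr; exact abs_potentialKernelMoment_le (hf.abs_diffQuot_le x z)
    _ = 4 * |diffQuot f x z| ^ 2 * (|z| * |diffQuot f x z|) ^ 2 := by ring
    _ ≤ 4 * ((1 + 4 * S ^ 2) * (1 + z ^ 2)⁻¹) * (2 * (f x ^ 2 + f (x - z) ^ 2)) := by
        rw [abs_mul_abs_diffQuot]
        refine mul_le_mul (mul_le_mul_of_nonneg_left (hf.sq_diffQuot_le x z) (by norm_num)) ?_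
          (by positivity) (by positivity)
        rw [sq_abs]
        linarith [sq_nonneg (f x + f (x - z))]
    _ = _ := by ring

lemma abs_deriv_sub_mul_potentialKernel_le (hf : IsProfile f S) (hw : IsWeight w) (x z : ℝ) :
    |(deriv w x - deriv w (x - z)) * f (x - z) * (z * potentialKernel (diffQuot f x z))|
      ≤ 12 * (1 + 4 * S ^ 2) * (1 + z ^ 2)⁻¹ * (f x ^ 2 + f (x - z) ^ 2) := by
  rw [abs_mul, abs_mul]
  calc _ ≤ 2 * |f (x - z)| * (4 * |f x - f (x - z)| * |diffQuot f x z| ^ 2) := by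
        gcongr
        exacts [hw.abs_deriv_sub_le_two _ _, hf.abs_mul_potentialKernel_le x z]
    _ = 8 * (|f (x - z)| * |f x - f (x - z)|) * |diffQuot f x z| ^ 2 := by ring
    _ ≤ 8 * (3 / 2 * (f x ^ 2 + f (x - z) ^ 2)) * ((1 + 4 * S ^ 2) * (1 + z ^ 2)⁻¹) := by
        refine mul_le_mul (mul_le_mul_of_nonneg_left ?_ (by norm_num)) (hf.sq_diffQuot_le x z)
          (by positivity) (by positivity)
        nlinarith [sq_nonneg (|f (x - z)| - |f x - f (x - z)|), sq_abs (f (x - z)),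
          sq_abs (f x - f (x - z)), sq_nonneg (f x + f (x - z)), sq_nonneg (f x)]
    _ = _ := by ring

lemma abs_sub_mul_sq_diffQuot_le (hf : IsProfile f S) (hw : IsWeight w) (x z : ℝ) :
    |w x - w (x - z)| * |f x - f (x - z)| * |diffQuot f x z| ^ 2
      ≤ 2 * (1 + 4 * S ^ 2) * (1 + z ^ 2)⁻¹ * |f x - f (x - z)| ^ 2 := by
  have near : |w x - w (x - z)| * |f x - f (x - z)| * |diffQuot f x z| ^ 2
      ≤ 1 / 2 * |f x - f (x - z)| ^ 2 := by
    calc _ ≤ |z| * |f x - f (x - z)| * |diffQuot f x z| ^ 2 := by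
          have := hw.abs_sub_le x (x - z)
          rw [sub_sub_cancel] at this
          gcongr
      _ = |f x - f (x - z)| * (|z| * |diffQuot f x z|) * |diffQuot f x z| := by ring
      _ ≤ |f x - f (x - z)| * |f x - f (x - z)| * (1 / 2) := by
          rw [abs_mul_abs_diffQuot]
          gcongr
          exact hf.abs_diffQuot_le x z
      _ = _ := by ring
  have far : z ^ 2 * (|w x - w (x - z)| * |f x - f (x - z)| * |diffQuot f x z| ^ 2)
      ≤ 4 * S * |f x - f (x - z)| ^ 2 := by
    calc _ = |w x - w (x - z)| * |f x - f (x - z)| * (|z| * |diffQuot f x z|) ^ 2 := by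
          rw [mul_pow, sq_abs z]; ring
      _ ≤ 2 * (2 * S) * |f x - f (x - z)| ^ 2 := by
          rw [abs_mul_abs_diffQuot]
          gcongr
          exacts [hw.abs_sub_le_two _ _, hf.abs_sub_le_two_mul _ _]
      _ = _ := by ring
  rw [mul_right_comm _ (1 + z ^ 2)⁻¹, ← div_eq_mul_inv, le_div_iff₀ (by positivity)]
  nlinarith [mul_nonneg (sq_nonneg (4 * S - 1)) (sq_nonneg |f x - f (x - z)|),
    sq_nonneg |f x - f (x - z)|]

lemma abs_sub_mul_deriv_mul_potentialKernel_le (hf : IsProfile f S) (hw : IsWeight w)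
    (x z : ℝ) :
    |(w x - w (x - z)) * deriv f (x - z) * (z * potentialKernel (diffQuot f x z))|
      ≤ 8 * (1 + 4 * S ^ 2) * (1 + z ^ 2)⁻¹ * (f x ^ 2 + f (x - z) ^ 2) := by
  rw [abs_mul, abs_mul]
  calc _ ≤ |w x - w (x - z)| * (1 / 2) * (4 * |f x - f (x - z)| * |diffQuot f x z| ^ 2) := by
        gcongr
        exacts [hf.abs_deriv_le _, hf.abs_mul_potentialKernel_le x z]
    _ = 2 * (|w x - w (x - z)| * |f x - f (x - z)| * |diffQuot f x z| ^ 2) := by ring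
    _ ≤ 2 * (2 * (1 + 4 * S ^ 2) * (1 + z ^ 2)⁻¹ * |f x - f (x - z)| ^ 2) :=
        mul_le_mul_of_nonneg_left (abs_sub_mul_sq_diffQuot_le hf hw x z) zero_le_two
    _ ≤ 2 * (2 * (1 + 4 * S ^ 2) * (1 + z ^ 2)⁻¹ * (2 * (f x ^ 2 + f (x - z) ^ 2))) := by
        gcongr
        rw [sq_abs]
        linarith [sq_nonneg (f x + f (x - z))]
    _ = _ := by ring

lemma abs_energyRemainder_le (hf : IsProfile f S) (hw : IsWeight w) (x z : ℝ) :
    |energyRemainder w f x z|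
      ≤ 28 * (1 + 4 * S ^ 2) * (1 + z ^ 2)⁻¹ * (f x ^ 2 + f (x - z) ^ 2) := by
  have moment : |deriv w x * (z ^ 2 * potentialKernelMoment (diffQuot f x z))|
      ≤ |z ^ 2 * potentialKernelMoment (diffQuot f x z)| := by
    rw [abs_mul]
    exact mul_le_of_le_one_left (abs_nonneg _) (hw.abs_deriv_le_one x)
  rw [energyRemainder, add_mul, ← add_assoc]
  linarith [abs_add_three (deriv w x * (z ^ 2 * potentialKernelMoment (diffQuot f x z)))
    ((deriv w x - deriv w (x - z)) * f (x - z) * (z * potentialKernel (diffQuot f x z)))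
    ((w x - w (x - z)) * deriv f (x - z) * (z * potentialKernel (diffQuot f x z))),
    abs_sq_mul_potentialKernelMoment_le hf x z, abs_deriv_sub_mul_potentialKernel_le hf hw x z,
    abs_sub_mul_deriv_mul_potentialKernel_le hf hw x z]

lemma integrable_sq_add_sq_sub (hf : IsProfile f S) (z : ℝ) :
    Integrable fun x => f x ^ 2 + f (x - z) ^ 2 :=
  hf.integrable_sq.add (hf.integrable_sq.comp_sub_right z)

lemma integral_sq_add_sq_sub (hf : IsProfile f S) (z : ℝ) :
    ∫ x, (f x ^ 2 + f (x - z) ^ 2) = 2 * ∫ x, f x ^ 2 := by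
  rw [integral_add hf.integrable_sq (hf.integrable_sq.comp_sub_right z),
    integral_sub_right_eq_self fun x => f x ^ 2, two_mul]

lemma integrable_energyRemainder (hf : IsProfile f S) (hw : IsWeight w) (z : ℝ) :
    Integrable fun x => energyRemainder w f x z := by
  have := measurable_diffQuot_left hf.measurable z
  have := hf.measurable
  have := hw.measurable
  have := measurable_deriv f
  have := measurable_deriv w
  refine ((integrable_sq_add_sq_sub hf z).const_mul _).mono' ?_
    (.of_forall fun x => abs_energyRemainder_le hf hw x z)
  unfold energyRemainder
  fun_prop

lemma integrable_energyPrimitive (hf : IsProfile f S) (hw : IsWeight w) (z : ℝ) :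
    Integrable fun x => energyPrimitive w f x z := by
  have := measurable_diffQuot_left hf.measurable z
  have hmoment : Integrable fun x => z ^ 2 * potentialKernelMoment (diffQuot f x z) :=
    ((integrable_sq_add_sq_sub hf z).const_mul _).mono'
      (Measurable.aestronglyMeasurable (by fun_prop))
      (.of_forall fun x => abs_sq_mul_potentialKernelMoment_le hf x z)
  have hΔwf : Integrable fun x => (w x - w (x - z)) * f (x - z) :=
    (hf.integrable.comp_sub_right z).bdd_mul
      (hw.measurable.sub (hw.measurable.comp (measurable_sub_const z))).aestronglyMeasurable
      (.of_forall fun x => hw.abs_sub_le_two x (x - z))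
  exact (hw.integrable_mul hmoment).add (hΔwf.mul_bdd
    (Measurable.aestronglyMeasurable (by fun_prop))
    (.of_forall fun x => hf.abs_mul_potentialKernel_le_inv x z))

lemma integral_sub_mul_potentialDerivIntegrand (hf : IsProfile f S) (hw : IsWeight w) (z : ℝ) :
    ∫ x, (w x * f x - w (x - z) * f (x - z)) * potentialDerivIntegrand f x z
      = -∫ x, energyRemainder w f x z := by
  have hsymm := integrable_sub_mul_potentialDerivIntegrand hf (hw.integrable_mul hf.integrable) z
  have hrem := integrable_energyRemainder hf hw z
  have by_parts := integral_eq_zero_of_hasDerivAt_of_integrable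
    (fun x => hasDerivAt_energyPrimitive hf hw x z) (hsymm.add hrem)
    (integrable_energyPrimitive hf hw z)
  rw [integral_add hsymm hrem] at by_parts
  linarith

lemma integral_weight_mul_potentialDeriv (hf : IsProfile f S) (hw : IsWeight w) :
    ∫ x, w x * f x * potentialDeriv f x = -(1 / 2 * ∫ z, ∫ x, energyRemainder w f x z) := by
  rw [integral_mul_potentialDeriv hf (hw.integrable_mul hf.integrable)]
  simp only [integral_sub_mul_potentialDerivIntegrand hf hw, integral_neg, mul_neg]

lemma integral_self_mul_potentialDeriv (hf : IsProfile f S) :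
    ∫ x, f x * potentialDeriv f x = 0 := by
  simpa [energyRemainder_one] using integral_weight_mul_potentialDeriv hf .one

lemma abs_integral_weight_mul_potentialDeriv_le (hf : IsProfile f S) (hw : IsWeight w) :
    |∫ x, w x * f x * potentialDeriv f x|
      ≤ 28 * (1 + 4 * S ^ 2) * Real.pi * ∫ x, f x ^ 2 := by
  have hrem (z : ℝ) : |∫ x, energyRemainder w f x z|
      ≤ 56 * (1 + 4 * S ^ 2) * (∫ x, f x ^ 2) * (1 + z ^ 2)⁻¹ := by
    rw [← Real.norm_eq_abs]
    refine (norm_integral_le_of_norm_le ((integrable_sq_add_sq_sub hf z).const_mul _)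
      (.of_forall fun x => abs_energyRemainder_le hf hw x z)).trans_eq ?_
    rw [integral_const_mul, integral_sq_add_sq_sub hf]
    ring
  have hint := norm_integral_le_of_norm_le
    (f := fun z => ∫ x, energyRemainder w f x z) (integrable_inv_one_add_sq.const_mul _)
    (.of_forall hrem)
  rw [integral_const_mul, integral_univ_inv_one_add_sq, Real.norm_eq_abs] at hint
  rw [integral_weight_mul_potentialDeriv hf hw, abs_neg, abs_mul, abs_of_pos one_half_pos]
  linarith

end NonlinearEnergy

section HilbertTransform

/-- The integrand of the principal value integral for the Hilbert transform of `f` at `x`, after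
folding the half-lines `z > 0` and `z < 0` onto each other. -/
noncomputable def hilbertKernel (f : ℝ → ℝ) (x z : ℝ) : ℝ := (f (x - z) - f (x + z)) / z

/-- The Hilbert transform as an absolutely convergent integral; the factor `1 / 2` accounts for
the evenness of `hilbertKernel f x`. -/
noncomputable def hilbert (f : ℝ → ℝ) (x : ℝ) : ℝ :=
  1 / (2 * Real.pi) * ∫ z, hilbertKernel f x z

variable {f u h : ℝ → ℝ} {K : NNReal} {S : ℝ}

lemma measurable_hilbertKernel (hf : Measurable f) :
    Measurable fun p : ℝ × ℝ => hilbertKernel f p.1 p.2 := by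
  unfold hilbertKernel; fun_prop

lemma measurable_hilbert (hf : Measurable f) : Measurable (hilbert f) :=
  (measurable_hilbertKernel hf).stronglyMeasurable.integral_prod_right'.measurable.const_mul _

lemma abs_hilbertKernel_le_of_lipschitzWith (hf : LipschitzWith K f) (x z : ℝ) :
    |hilbertKernel f x z| ≤ 2 * K := by
  rw [hilbertKernel, abs_div]
  refine div_le_of_le_mul₀ (abs_nonneg _) (by positivity) ((hf.dist_le_mul _ _).trans_eq ?_)
  rw [Real.dist_eq, show x - z - (x + z) = -(2 * z) by ring, abs_neg, abs_mul, abs_two]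
  ring

lemma abs_hilbertKernel_le_of_one_le_sq (f : ℝ → ℝ) (x : ℝ) {z : ℝ} (hz : 1 ≤ z ^ 2) :
    |hilbertKernel f x z|
      ≤ 2 * (1 + z ^ 2)⁻¹ + 1 / 2 * (f (x - z) ^ 2 + f (x + z) ^ 2) := by
  have inv_le : (z⁻¹) ^ 2 ≤ 2 * (1 + z ^ 2)⁻¹ := by
    rw [inv_pow, ← div_eq_mul_inv, inv_eq_one_div,
      div_le_div_iff₀ (by positivity) (by positivity)]
    linarith
  rw [hilbertKernel, div_eq_mul_inv, abs_le]
  constructor <;> nlinarith [sq_nonneg (f (x - z) - z⁻¹), sq_nonneg (f (x + z) - z⁻¹),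
    sq_nonneg (f (x - z) + z⁻¹), sq_nonneg (f (x + z) + z⁻¹)]

lemma abs_hilbertKernel_le (hf : LipschitzWith K f) (x z : ℝ) :
    |hilbertKernel f x z| ≤ (4 * K + 2) * (1 + z ^ 2)⁻¹
      + 1 / 2 * (f (x - z) ^ 2 + f (x + z) ^ 2) := by
  have hk : 0 < (1 + z ^ 2)⁻¹ := by positivity
  rcases le_total (z ^ 2) 1 with hz | hz
  · have : 1 / 2 ≤ (1 + z ^ 2)⁻¹ := by
      rw [one_div]
      exact inv_anti₀ (by positivity) (by linarith)
    nlinarith [abs_hilbertKernel_le_of_lipschitzWith hf x z, K.coe_nonneg,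
      sq_nonneg (f (x - z)), sq_nonneg (f (x + z))]
  · nlinarith [abs_hilbertKernel_le_of_one_le_sq f x hz, K.coe_nonneg]

lemma integrable_hilbertKernel_bound (hsq : Integrable fun x => f x ^ 2) (x C : ℝ) :
    Integrable fun z => C * (1 + z ^ 2)⁻¹ + 1 / 2 * (f (x - z) ^ 2 + f (x + z) ^ 2) :=
  (integrable_inv_one_add_sq.const_mul _).add
    (((hsq.comp_sub_left x).add (hsq.comp_add_left x)).const_mul _)

lemma integrable_hilbertKernel (hf : LipschitzWith K f) (hsq : Integrable fun x => f x ^ 2)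
    (x : ℝ) : Integrable (hilbertKernel f x) :=
  (integrable_hilbertKernel_bound hsq x _).mono'
    ((measurable_hilbertKernel hf.continuous.measurable).comp
      measurable_prodMk_left).aestronglyMeasurable
    (.of_forall (abs_hilbertKernel_le hf x))

lemma integral_abs_hilbertKernel_le (hf : LipschitzWith K f)
    (hsq : Integrable fun x => f x ^ 2) (x : ℝ) :
    ∫ z, |hilbertKernel f x z| ≤ (4 * K + 2) * Real.pi + ∫ y, f y ^ 2 := by
  refine (integral_mono (integrable_hilbertKernel hf hsq x).abs
    (integrable_hilbertKernel_bound hsq x _) (abs_hilbertKernel_le hf x)).trans_eq ?_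
  have hl := hsq.comp_sub_left x
  have hr := hsq.comp_add_left x
  have hlr : Integrable fun z => f (x - z) ^ 2 + f (x + z) ^ 2 := hl.add hr
  rw [integral_add (integrable_inv_one_add_sq.const_mul _) (hlr.const_mul _),
    integral_const_mul, integral_const_mul, integral_univ_inv_one_add_sq, integral_add hl hr,
    integral_sub_left_eq_self (fun y => f y ^ 2) volume x,
    integral_add_left_eq_self (fun y => f y ^ 2) x]
  ring

lemma abs_hilbert_le (hf : LipschitzWith K f) (hsq : Integrable fun x => f x ^ 2) (x : ℝ) :
    |hilbert f x| ≤ 2 * K + 1 + ∫ y, f y ^ 2 := by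
  have hπ := Real.pi_gt_three
  have hF : 0 ≤ ∫ y, f y ^ 2 := integral_nonneg fun y => sq_nonneg (f y)
  rw [hilbert, abs_mul, abs_of_pos (by positivity), div_mul_eq_mul_div, one_mul,
    div_le_iff₀ (by positivity)]
  calc |∫ z, hilbertKernel f x z| ≤ ∫ z, |hilbertKernel f x z| := abs_integral_le_integral_abs
    _ ≤ (4 * K + 2) * Real.pi + ∫ y, f y ^ 2 := integral_abs_hilbertKernel_le hf hsq x
    _ ≤ (2 * K + 1 + ∫ y, f y ^ 2) * (2 * Real.pi) := by nlinarith

lemma measurableSet_lt_abs (δ : ℝ) : MeasurableSet {z : ℝ | δ < |z|} :=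
  measurableSet_lt measurable_const measurable_id.abs

lemma integrableOn_div_of_lt_abs (hf : Integrable f) (x : ℝ) {δ : ℝ} (hδ : 0 < δ) :
    IntegrableOn (fun z => f (x - z) / z) {z | δ < |z|} := by
  refine (hf.comp_sub_left x).integrableOn.mul_bdd (c := δ⁻¹)
    measurable_inv.aestronglyMeasurable ?_
  filter_upwards [ae_restrict_mem (measurableSet_lt_abs δ)] with z hz
  rw [norm_inv]
  exact inv_anti₀ hδ (le_of_lt hz)

lemma setIntegral_div_sub_eq (hf : Integrable f) (x : ℝ) {δ : ℝ} (hδ : 0 < δ) :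
    ∫ y in {y : ℝ | δ < |x - y|}, f y / (x - y)
      = 1 / 2 * ∫ z in {z : ℝ | δ < |z|}, hilbertKernel f x z := by
  have hmeas := measurableSet_lt_abs δ
  have hmeas' : MeasurableSet {y : ℝ | δ < |x - y|} := hmeas.preimage (measurable_const_sub x)
  set v : ℝ → ℝ := {z : ℝ | δ < |z|}.indicator fun z => f (x - z) / z with hv
  have hvint : Integrable v :=
    (integrable_indicator_iff hmeas).2 (integrableOn_div_of_lt_abs hf x hδ)
  have shift : ∫ y in {y : ℝ | δ < |x - y|}, f y / (x - y) = ∫ z, v z := by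
    rw [← integral_indicator hmeas', ← integral_sub_left_eq_self v volume x]
    congr with y
    simp only [hv, Set.indicator_apply, Set.mem_ofPred_eq, sub_sub_cancel]
  have fold : {z : ℝ | δ < |z|}.indicator (hilbertKernel f x) = fun z => v z + v (-z) := by
    ext z
    simp only [hv, Set.indicator_apply, Set.mem_ofPred_eq, abs_neg, hilbertKernel]
    split_ifs
    · rw [sub_neg_eq_add, div_neg, ← sub_eq_add_neg, sub_div]
    · rw [add_zero]
  rw [shift, ← integral_indicator hmeas, fold, integral_add hvint hvint.comp_neg,
    integral_neg_eq_self]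
  ring

lemma tendsto_setIntegral_lt_abs {v : ℝ → ℝ} (hv : Integrable v) :
    Tendsto (fun δ : ℝ => ∫ z in {z : ℝ | δ < |z|}, v z)
      (nhdsWithin 0 (Set.Ioi 0)) (nhds (∫ z, v z)) := by
  simp only [← integral_indicator (measurableSet_lt_abs _)]
  refine tendsto_integral_filter_of_dominated_convergence (fun z => ‖v z‖)
    (.of_forall fun δ => hv.aestronglyMeasurable.indicator (measurableSet_lt_abs δ))
    (.of_forall fun δ => .of_forall fun z => norm_indicator_le_norm_self _ _) hv.norm ?_
  filter_upwards [Measure.ae_ne volume (0 : ℝ)] with z hz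
  refine tendsto_const_nhds.congr' ?_
  filter_upwards [mem_nhdsWithin_of_mem_nhds (Iio_mem_nhds (abs_pos.2 hz))] with δ hδ
  exact (Set.indicator_of_mem (s := {z : ℝ | δ < |z|}) hδ v).symm

lemma IsHilbertTransform.eq_hilbert (hh : IsHilbertTransform f h) (hf : LipschitzWith K f)
    (hint : Integrable f) (hsq : Integrable fun x => f x ^ 2) (x : ℝ) : h x = hilbert f x := by
  refine tendsto_nhds_unique (hh x) (((tendsto_setIntegral_lt_abs
    (integrable_hilbertKernel hf hsq x)).const_mul (1 / (2 * Real.pi))).congr' ?_)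
  filter_upwards [self_mem_nhdsWithin] with δ hδ
  rw [setIntegral_div_sub_eq hint x hδ]
  field_simp

lemma IsHilbertTransform.const_mul (c : ℝ) (hh : IsHilbertTransform f h) :
    IsHilbertTransform (fun x => c * f x) fun x => c * h x := fun x => by
  simpa only [mul_div_assoc, integral_const_mul, mul_left_comm] using (hh x).const_mul c

lemma integrable_mul_hilbertKernel (hu : Integrable u) (hf : LipschitzWith K f)
    (hsq : Integrable fun x => f x ^ 2) :
    Integrable (fun p : ℝ × ℝ => u p.1 * hilbertKernel f p.1 p.2) (volume.prod volume) := by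
  have hmeas : AEStronglyMeasurable (fun p : ℝ × ℝ => u p.1 * hilbertKernel f p.1 p.2)
      (volume.prod volume) :=
    hu.aestronglyMeasurable.comp_fst.mul
      (measurable_hilbertKernel hf.continuous.measurable).aestronglyMeasurable
  refine (integrable_prod_iff hmeas).2
    ⟨.of_forall fun x => (integrable_hilbertKernel hf hsq x).const_mul (u x), ?_⟩
  refine (hu.norm.mul_const ((4 * K + 2) * Real.pi + ∫ y, f y ^ 2)).mono'
    hmeas.norm.integral_prod_right' (.of_forall fun x => ?_)
  simp only [norm_mul, integral_const_mul, Real.norm_eq_abs, abs_abs]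
  rw [abs_of_nonneg (integral_nonneg fun z => abs_nonneg _)]
  exact mul_le_mul_of_nonneg_left (integral_abs_hilbertKernel_le hf hsq x) (abs_nonneg _)

lemma integral_mul_hilbertKernel_left (hu : Integrable u) (hf : Measurable f)
    (hfS : ∀ x, |f x| ≤ S) (z : ℝ) :
    ∫ x, u x * hilbertKernel f x z = (∫ x, (u x * f (x - z) - u (x - z) * f x)) / z := by
  have hl : Integrable fun x => u x * f (x - z) :=
    hu.mul_bdd (hf.comp (measurable_sub_const z)).aestronglyMeasurable
      (.of_forall fun x => hfS (x - z))
  have hr : Integrable fun x => u x * f (x + z) :=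
    hu.mul_bdd (hf.comp (measurable_add_const z)).aestronglyMeasurable
      (.of_forall fun x => hfS (x + z))
  have hr' : Integrable fun x => u (x - z) * f x := by
    simpa only [sub_add_cancel] using hr.comp_sub_right z
  have shift : ∫ x, u x * f (x + z) = ∫ x, u (x - z) * f x := by
    simpa only [sub_add_cancel] using
      (integral_sub_right_eq_self (fun x => u x * f (x + z)) z).symm
  simp only [hilbertKernel, ← mul_div_assoc, mul_sub, integral_div]
  rw [integral_sub hl hr, integral_sub hl hr', shift]

lemma integral_mul_hilbert (hu : Integrable u) (hf : LipschitzWith K f)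
    (hsq : Integrable fun x => f x ^ 2) (hfS : ∀ x, |f x| ≤ S) :
    ∫ x, u x * hilbert f x
      = 1 / (2 * Real.pi) * ∫ z, (∫ x, (u x * f (x - z) - u (x - z) * f x)) / z := by
  simp only [← integral_mul_hilbertKernel_left hu hf.continuous.measurable hfS]
  rw [← integral_integral_swap (integrable_mul_hilbertKernel hu hf hsq), ← integral_const_mul]
  simp only [hilbert, integral_const_mul, mul_left_comm]

lemma integral_self_mul_hilbert (hint : Integrable f) (hf : LipschitzWith K f)
    (hsq : Integrable fun x => f x ^ 2) (hfS : ∀ x, |f x| ≤ S) :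
    ∫ x, f x * hilbert f x = 0 := by
  rw [integral_mul_hilbert hint hf hsq hfS]
  simp [mul_comm]

end HilbertTransform

section Lorentzian

/-- The Lorentzian cutoff at scale `R`. Its differences factorize, see `lorentzian_sub`, so that
the Hilbert transform can be tested against it exactly. -/
noncomputable def lorentzian (R x : ℝ) : ℝ := (1 + (x / R) ^ 2)⁻¹

variable {R : ℝ}

lemma lorentzian_pos (R x : ℝ) : 0 < lorentzian R x := by
  unfold lorentzian; positivity

lemma lorentzian_le_one (R x : ℝ) : lorentzian R x ≤ 1 :=
  inv_le_one_of_one_le₀ (by linarith [sq_nonneg (x / R)])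

lemma abs_lorentzian_le_one (R x : ℝ) : |lorentzian R x| ≤ 1 := by
  rw [abs_of_pos (lorentzian_pos R x)]
  exact lorentzian_le_one R x

lemma lorentzian_sub (hR : R ≠ 0) (x y : ℝ) :
    lorentzian R x - lorentzian R y
      = -((x - y) * (x + y) / R ^ 2) * (lorentzian R x * lorentzian R y) := by
  have : 1 + (x / R) ^ 2 ≠ 0 := by positivity
  have : 1 + (y / R) ^ 2 ≠ 0 := by positivity
  simp only [lorentzian]
  field_simp
  ring

lemma hasDerivAt_lorentzian (R x : ℝ) :
    HasDerivAt (lorentzian R) (-(2 * (x / R) / R) * lorentzian R x ^ 2) x := by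
  have hx : 1 + (x / R) ^ 2 ≠ 0 := by positivity
  refine (((((hasDerivAt_id x).div_const R).pow 2).const_add 1).inv hx).congr_deriv ?_
  simp only [lorentzian, id, Pi.pow_apply]
  field_simp
  push_cast
  ring

lemma contDiff_lorentzian (R : ℝ) : ContDiff ℝ 1 (lorentzian R) :=
  ContDiff.inv (by fun_prop) fun x => by positivity

lemma continuous_lorentzian (R : ℝ) : Continuous (lorentzian R) :=
  (contDiff_lorentzian R).continuous

lemma abs_mul_lorentzian_le (hR : 0 < R) (x : ℝ) : |x * lorentzian R x| ≤ R / 2 := by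
  rw [lorentzian, ← div_eq_mul_inv, abs_div, abs_of_pos (by positivity : 0 < 1 + (x / R) ^ 2),
    div_le_iff₀ (by positivity)]
  have : |x| = R * |x / R| := by rw [abs_div, abs_of_pos hR, mul_div_cancel₀ _ hR.ne']
  nlinarith [mul_nonneg hR.le (sq_nonneg (|x / R| - 1)), sq_abs (x / R)]

lemma sq_mul_lorentzian_le (hR : 0 < R) (x : ℝ) :
    (x * lorentzian R x) ^ 2 ≤ R ^ 2 * lorentzian R x := by
  have hx : x ^ 2 * lorentzian R x ≤ R ^ 2 := by
    rw [lorentzian, ← div_eq_mul_inv, div_le_iff₀ (by positivity), div_pow, mul_add,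
      mul_div_cancel₀ _ (by positivity)]
    linarith [sq_nonneg R]
  calc (x * lorentzian R x) ^ 2 = x ^ 2 * lorentzian R x * lorentzian R x := by ring
    _ ≤ R ^ 2 * lorentzian R x := mul_le_mul_of_nonneg_right hx (lorentzian_pos R x).le

lemma isWeight_lorentzian (hR : 1 ≤ R) : IsWeight (lorentzian R) where
  contDiff := contDiff_lorentzian R
  abs_le_one := abs_lorentzian_le_one R
  abs_deriv_le_one x := by
    have hR0 : 0 < R := one_pos.trans_le hR
    rw [(hasDerivAt_lorentzian R x).deriv,
      show -(2 * (x / R) / R) * lorentzian R x ^ 2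
        = -(2 / R ^ 2) * (x * lorentzian R x) * lorentzian R x by field_simp,
      abs_mul, abs_mul, abs_neg, abs_of_pos (by positivity : 0 < 2 / R ^ 2)]
    calc _ ≤ 2 / R ^ 2 * (R / 2) * 1 := by
          gcongr
          exacts [abs_mul_lorentzian_le hR0 x, abs_lorentzian_le_one R x]
      _ = 1 / R := by field_simp
      _ ≤ 1 := by rwa [div_le_one hR0]

lemma integrable_lorentzian (hR : R ≠ 0) : Integrable (lorentzian R) :=
  integrable_inv_one_add_sq.comp_div hR

lemma integral_lorentzian (hR : 0 < R) : ∫ x, lorentzian R x = Real.pi * R := by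
  have := Measure.integral_comp_div (fun x : ℝ => (1 + x ^ 2)⁻¹) R
  rw [integral_univ_inv_one_add_sq, abs_of_pos hR, smul_eq_mul] at this
  rw [mul_comm]
  exact this

lemma tendsto_lorentzian_one (x : ℝ) :
    Tendsto (fun n : ℕ => lorentzian (n + 1) x) atTop (nhds 1) := by
  have hdiv : Tendsto (fun n : ℕ => x / (n + 1 : ℝ)) atTop (nhds 0) :=
    tendsto_const_nhds.div_atTop (tendsto_natCast_atTop_atTop.atTop_add tendsto_const_nhds)
  simpa [lorentzian] using ((hdiv.pow 2).const_add 1).inv₀ (by norm_num)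

lemma tendsto_integral_lorentzian_mul {q : ℝ → ℝ} (hq : Integrable q) :
    Tendsto (fun n : ℕ => ∫ x, lorentzian (n + 1) x * q x) atTop (nhds (∫ x, q x)) := by
  refine tendsto_integral_of_dominated_convergence (fun x => ‖q x‖)
    (fun n => (continuous_lorentzian _).aestronglyMeasurable.mul hq.aestronglyMeasurable) hq.norm
    (fun n => .of_forall fun x => ?_) (.of_forall fun x => ?_)
  · rw [norm_mul]
    exact mul_le_of_le_one_left (norm_nonneg _) (abs_lorentzian_le_one _ x)
  · simpa using (tendsto_lorentzian_one x).mul_const (q x)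

end Lorentzian

section WeightedHilbert

variable {f : ℝ → ℝ} {K : NNReal} {S R : ℝ}

lemma sq_integral_mul_le {α : Type*} [MeasurableSpace α] {μ : Measure α} {u v : α → ℝ}
    (hu : Integrable (fun x => u x ^ 2) μ) (hv : Integrable (fun x => v x ^ 2) μ) :
    (∫ x, u x * v x ∂μ) ^ 2 ≤ (∫ x, u x ^ 2 ∂μ) * ∫ x, v x ^ 2 ∂μ := by
  by_cases huv : Integrable (fun x => u x * v x) μ
  · have quadratic (s : ℝ) : 0 ≤ (∫ x, u x ^ 2 ∂μ) * (s * s) + 2 * (∫ x, u x * v x ∂μ) * s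
        + ∫ x, v x ^ 2 ∂μ := by
      have hnonneg : 0 ≤ ∫ x, (u x ^ 2 * (s * s) + u x * v x * (2 * s) + v x ^ 2) ∂μ :=
        integral_nonneg fun x => by
          simp only [Pi.zero_apply]
          linear_combination sq_nonneg (s * u x + v x)
      have huu := hu.mul_const (s * s)
      have huv' := huv.mul_const (2 * s)
      have hsum : Integrable (fun x => u x ^ 2 * (s * s) + u x * v x * (2 * s)) μ :=
        huu.add huv'
      rw [integral_add hsum hv, integral_add huu huv', integral_mul_const,
        integral_mul_const] at hnonneg
      linarith
    have := discrim_le_zero quadratic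
    rw [discrim] at this
    linarith
  · rw [integral_undef huv, zero_pow two_ne_zero]
    exact mul_nonneg (integral_nonneg fun x => sq_nonneg _) (integral_nonneg fun x => sq_nonneg _)

lemma integrable_mul_sub {a b : ℝ → ℝ} (ha : Integrable a) (hb : Integrable b) :
    Integrable (fun p : ℝ × ℝ => a p.2 * b (p.2 - p.1)) (volume.prod volume) := by
  simpa using ha.convolution_integrand (.mul ℝ ℝ) hb.comp_neg

lemma integral_integral_mul_sub {a b : ℝ → ℝ} (ha : Integrable a) (hb : Integrable b) :
    ∫ z, ∫ x, a x * b (x - z) = (∫ x, a x) * ∫ x, b x := by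
  simpa [convolution_def, integral_neg_eq_self] using
    integral_convolution (.mul ℝ ℝ) ha hb.comp_neg

lemma lorentzian_commutator (hR : R ≠ 0) (f : ℝ → ℝ) (x : ℝ) {z : ℝ} (hz : z ≠ 0) :
    (lorentzian R x * f x * f (x - z) - lorentzian R (x - z) * f (x - z) * f x) / z
      = -(1 / R ^ 2) *
        (x * lorentzian R x * f x * (lorentzian R (x - z) * f (x - z))
          + lorentzian R x * f x * ((x - z) * lorentzian R (x - z) * f (x - z))) := by
  have hw := lorentzian_sub hR x (x - z)
  rw [sub_sub_cancel] at hw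
  rw [div_eq_iff hz]
  linear_combination f x * f (x - z) * hw

lemma integral_lorentzian_mul_hilbert (hR : 0 < R) (hint : Integrable f)
    (hf : LipschitzWith K f) (hsq : Integrable fun x => f x ^ 2) (hfS : ∀ x, |f x| ≤ S) :
    ∫ x, lorentzian R x * f x * hilbert f x
      = -(1 / (Real.pi * R ^ 2)) *
        ((∫ x, x * lorentzian R x * f x) * ∫ x, lorentzian R x * f x) := by
  have hb : Integrable fun x => lorentzian R x * f x :=
    hint.bdd_mul (continuous_lorentzian R).aestronglyMeasurable
      (.of_forall (abs_lorentzian_le_one R))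
  have ha : Integrable fun x => x * lorentzian R x * f x :=
    hint.bdd_mul (continuous_id.mul (continuous_lorentzian R)).aestronglyMeasurable
      (.of_forall (abs_mul_lorentzian_le hR))
  have commutator : ∀ᵐ z : ℝ,
      (∫ x, (lorentzian R x * f x * f (x - z) - lorentzian R (x - z) * f (x - z) * f x)) / z
        = -(1 / R ^ 2) *
          ∫ x, (x * lorentzian R x * f x * (lorentzian R (x - z) * f (x - z))
            + lorentzian R x * f x * ((x - z) * lorentzian R (x - z) * f (x - z))) := by
    filter_upwards [Measure.ae_ne volume (0 : ℝ)] with z hz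
    simp only [← integral_div, ← integral_const_mul, lorentzian_commutator hR.ne' f _ hz]
  rw [integral_mul_hilbert hb hf hsq hfS, integral_congr_ae commutator, integral_const_mul,
    integral_integral_add (integrable_mul_sub ha hb) (integrable_mul_sub hb ha),
    integral_integral_mul_sub ha hb, integral_integral_mul_sub hb ha]
  field_simp
  ring

lemma abs_integral_lorentzian_mul_hilbert_le (hR : 0 < R) (hint : Integrable f)
    (hf : LipschitzWith K f) (hsq : Integrable fun x => f x ^ 2) (hfS : ∀ x, |f x| ≤ S) :
    |∫ x, lorentzian R x * f x * hilbert f x| ≤ ∫ x, f x ^ 2 := by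
  have hF : 0 ≤ ∫ x, f x ^ 2 := integral_nonneg fun x => sq_nonneg (f x)
  have hw := integrable_lorentzian hR.ne'
  have sq_le (x : ℝ) : lorentzian R x ^ 2 ≤ lorentzian R x := by
    nlinarith [lorentzian_pos R x, lorentzian_le_one R x]
  have hw2 : Integrable fun x => lorentzian R x ^ 2 :=
    hw.mono' ((continuous_lorentzian R).pow 2).aestronglyMeasurable
      (.of_forall fun x => by rw [Real.norm_eq_abs, abs_sq]; exact sq_le x)
  have hxw2 : Integrable fun x => (x * lorentzian R x) ^ 2 :=
    (hw.const_mul (R ^ 2)).mono'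
      ((continuous_id.mul (continuous_lorentzian R)).pow 2).aestronglyMeasurable
      (.of_forall fun x => by rw [Real.norm_eq_abs, abs_sq]; exact sq_mul_lorentzian_le hR x)
  have hA : (∫ x, x * lorentzian R x * f x) ^ 2 ≤ Real.pi * R ^ 3 * ∫ x, f x ^ 2 := by
    refine (sq_integral_mul_le hxw2 hsq).trans (mul_le_mul_of_nonneg_right ?_ hF)
    calc _ ≤ ∫ x, R ^ 2 * lorentzian R x :=
          integral_mono hxw2 (hw.const_mul _) (sq_mul_lorentzian_le hR)
      _ = Real.pi * R ^ 3 := by rw [integral_const_mul, integral_lorentzian hR]; ring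
  have hB : (∫ x, lorentzian R x * f x) ^ 2 ≤ Real.pi * R * ∫ x, f x ^ 2 := by
    refine (sq_integral_mul_le hw2 hsq).trans (mul_le_mul_of_nonneg_right ?_ hF)
    exact (integral_mono hw2 hw sq_le).trans_eq (integral_lorentzian hR)
  rw [integral_lorentzian_mul_hilbert hR hint hf hsq hfS]
  refine abs_le_of_sq_le_sq ?_ hF
  calc _ = 1 / (Real.pi * R ^ 2) ^ 2 *
        ((∫ x, x * lorentzian R x * f x) ^ 2 * (∫ x, lorentzian R x * f x) ^ 2) := by ring
    _ ≤ 1 / (Real.pi * R ^ 2) ^ 2 *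
        ((Real.pi * R ^ 3 * ∫ x, f x ^ 2) * (Real.pi * R * ∫ x, f x ^ 2)) := by gcongr
    _ = (∫ x, f x ^ 2) ^ 2 := by field_simp

end WeightedHilbert

section EvolutionRhs

/-- The right-hand side of the evolution equation for `f = ε * g`; in terms of `f` the equation
no longer involves `ε`. -/
noncomputable def evolutionRhs (f : ℝ → ℝ) (x : ℝ) : ℝ :=
  hilbert f x + 1 / Real.pi * potentialDeriv f x

variable {f : ℝ → ℝ} {S M R : ℝ}

lemma IsProfile.lipschitzWith (hf : IsProfile f S) : LipschitzWith (1 / 2) f :=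
  .of_dist_le_mul fun a b => by simpa [Real.dist_eq] using hf.abs_sub_le a b

lemma measurable_evolutionRhs (hf : IsProfile f S) : Measurable (evolutionRhs f) :=
  (measurable_hilbert hf.measurable).add (hf.measurable_potentialDeriv.const_mul _)

lemma IsProfile.abs_hilbert_le_two_add (hf : IsProfile f S) (x : ℝ) :
    |hilbert f x| ≤ 2 + ∫ y, f y ^ 2 := by
  refine (abs_hilbert_le hf.lipschitzWith hf.integrable_sq x).trans_eq ?_
  norm_num

lemma abs_evolutionRhs_le (hf : IsProfile f S) (x : ℝ) :
    |evolutionRhs f x| ≤ 2 + (∫ y, f y ^ 2) + 4 * (1 + 4 * S ^ 2) := by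
  refine (abs_add_le _ _).trans (add_le_add (hf.abs_hilbert_le_two_add x) ?_)
  rw [abs_mul, abs_of_pos (by positivity), div_mul_eq_mul_div, one_mul,
    div_le_iff₀ Real.pi_pos]
  exact hf.abs_potentialDeriv_le x

lemma integrable_mul_evolutionRhs (hf : IsProfile f S) :
    Integrable fun x => f x * evolutionRhs f x :=
  hf.integrable.mul_bdd (measurable_evolutionRhs hf).aestronglyMeasurable
    (.of_forall (abs_evolutionRhs_le hf))

lemma integral_weight_mul_evolutionRhs {w : ℝ → ℝ} (hf : IsProfile f S) (hw : IsWeight w) :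
    ∫ x, w x * (f x * evolutionRhs f x)
      = (∫ x, w x * f x * hilbert f x) + 1 / Real.pi * ∫ x, w x * f x * potentialDeriv f x := by
  have hwf := hw.integrable_mul hf.integrable
  have hH : Integrable fun x => w x * f x * hilbert f x :=
    hwf.mul_bdd (measurable_hilbert hf.measurable).aestronglyMeasurable
      (.of_forall hf.abs_hilbert_le_two_add)
  have hP : Integrable fun x => w x * f x * potentialDeriv f x :=
    hwf.mul_bdd hf.measurable_potentialDeriv.aestronglyMeasurable
      (.of_forall hf.abs_potentialDeriv_le)
  rw [← integral_const_mul, ← integral_add hH (hP.const_mul _)]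
  congr 1
  ext x
  rw [evolutionRhs]
  ring

lemma integral_self_mul_evolutionRhs (hf : IsProfile f S) :
    ∫ x, f x * evolutionRhs f x = 0 := by
  simpa [integral_self_mul_potentialDeriv hf, integral_self_mul_hilbert hf.integrable
    hf.lipschitzWith hf.integrable_sq hf.abs_le] using integral_weight_mul_evolutionRhs hf .one

lemma abs_integral_lorentzian_mul_evolutionRhs_le (hf : IsProfile f S) (hR : 1 ≤ R) :
    |∫ x, lorentzian R x * (f x * evolutionRhs f x)|
      ≤ (1 + 28 * (1 + 4 * S ^ 2)) * ∫ x, f x ^ 2 := by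
  have hw := isWeight_lorentzian hR
  rw [integral_weight_mul_evolutionRhs hf hw, one_add_mul]
  refine (abs_add_le _ _).trans (add_le_add (abs_integral_lorentzian_mul_hilbert_le
    (one_pos.trans_le hR) hf.integrable hf.lipschitzWith hf.integrable_sq hf.abs_le) ?_)
  rw [abs_mul, abs_of_pos (by positivity), div_mul_eq_mul_div, one_mul, div_le_iff₀ Real.pi_pos]
  exact (abs_integral_weight_mul_potentialDeriv_le hf hw).trans_eq (by ring)

lemma tendsto_integral_lorentzian_mul_evolutionRhs (hf : IsProfile f S) :
    Tendsto (fun n : ℕ => ∫ x, lorentzian (n + 1) x * (f x * evolutionRhs f x)) atTop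
      (nhds 0) := by
  rw [← integral_self_mul_evolutionRhs hf]
  exact tendsto_integral_lorentzian_mul (integrable_mul_evolutionRhs hf)

lemma abs_pow_three_le_of_lipschitzWith {K : NNReal} (hK : 0 < K) (hf : LipschitzWith K f)
    (hsq : Integrable fun x => f x ^ 2) (x : ℝ) : |f x| ^ 3 ≤ 4 * K * ∫ y, f y ^ 2 := by
  have : (0 : ℝ) < K := hK
  set r := |f x| / (2 * K)
  have hr : 0 ≤ r := by positivity
  have lower : ∀ y ∈ Set.Icc (x - r) (x + r), |f x| ^ 2 / 4 ≤ f y ^ 2 := by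
    intro y hy
    have hxy : |f x - f y| ≤ |f x| / 2 := by
      refine (hf.dist_le_mul x y).trans ?_
      calc K * |x - y| ≤ K * r := by
            gcongr
            exact abs_sub_le_iff.2 ⟨by linarith [hy.1], by linarith [hy.2]⟩
        _ = |f x| / 2 := by simp only [r]; field_simp
    have hy : |f x| / 2 ≤ |f y| := by linarith [abs_sub_abs_le_abs_sub (f x) (f y)]
    rw [← sq_abs (f y)]
    nlinarith [abs_nonneg (f x)]
  have hint := calc ∫ _ in Set.Icc (x - r) (x + r), |f x| ^ 2 / 4
      ≤ ∫ y in Set.Icc (x - r) (x + r), f y ^ 2 :=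
        setIntegral_mono_on (by simp) hsq.integrableOn measurableSet_Icc lower
    _ ≤ ∫ y, f y ^ 2 := setIntegral_le_integral hsq (.of_forall fun y => sq_nonneg (f y))
  rw [setIntegral_const, Real.volume_real_Icc_of_le (by linarith), smul_eq_mul] at hint
  calc |f x| ^ 3 = 4 * K * ((x + r - (x - r)) * (|f x| ^ 2 / 4)) := by
        simp only [r]; field_simp; ring
    _ ≤ 4 * K * ∫ y, f y ^ 2 := by gcongr

lemma IsProfile.of_integral_sq_le (hf : IsProfile f S) (hM : ∫ x, f x ^ 2 ≤ M) :
    IsProfile f (1 + 2 * M) where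
  __ := hf
  abs_le x := by
    have hcube := abs_pow_three_le_of_lipschitzWith (by norm_num) hf.lipschitzWith
      hf.integrable_sq x
    push_cast at hcube
    by_contra! hlt
    have hM0 : 0 ≤ M := (integral_nonneg fun x => sq_nonneg (f x)).trans hM
    have := le_self_pow₀ (by linarith : 1 ≤ |f x|) (three_ne_zero)
    linarith

end EvolutionRhs

section LocalConstancy

variable {X Y : Type*} [TopologicalSpace X]

/-- The points of `K` near which the restriction of `N` to `K` is not constant. -/
def varyingSet (N : X → Y) (K : Set X) : Set X :=
  {x ∈ K | ¬ ∀ᶠ y in nhdsWithin x K, N y = N x}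

lemma isClosed_varyingSet {N : X → Y} {K : Set X} (hK : IsClosed K) :
    IsClosed (varyingSet N K) := by
  refine isClosed_of_closure_subset fun x hx => ?_
  refine ⟨closure_minimal (fun y hy => hy.1) hK hx, fun hconst => ?_⟩
  have hconst' : ∀ᶠ y in nhdsWithin x K, y ∉ varyingSet N K := by
    filter_upwards [hconst, eventually_eventually_nhdsWithin.2 hconst] with y hy hy' hmem
    exact hmem.2 (hy'.mono fun z hz => hz.trans hy.symm)
  rw [eventually_nhdsWithin_iff] at hconst'
  obtain ⟨y, hy, hy'⟩ := ((mem_closure_iff_frequently.1 hx).and_eventually hconst').exists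
  exact hy' hy.1 hy

lemma eq_of_isPreconnected_of_disjoint_varyingSet {N : X → Y} {K s : Set X} (hs : IsPreconnected s)
    (hsK : s ⊆ K) (hdisj : Disjoint s (varyingSet N K)) {x y : X} (hx : x ∈ s) (hy : y ∈ s) :
    N x = N y := by
  refine hs.induction₂ (fun a b => N a = N b) (fun a ha => ?_) (fun _ _ _ _ _ _ => Eq.trans)
    (fun _ _ _ _ => Eq.symm) hx hy
  have hconst : ∀ᶠ b in nhdsWithin a K, N b = N a :=
    of_not_not fun h => hdisj.notMem_of_mem_left ha ⟨hsK ha, h⟩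
  exact (hconst.filter_mono (nhdsWithin_mono a hsK)).mono fun b => Eq.symm

lemma exists_eventually_le_of_lowerSemicontinuous [BaireSpace X] [Nonempty X] {N : X → ℝ}
    (hN : LowerSemicontinuous N) : ∃ x, ∃ n : ℕ, ∀ᶠ y in nhds x, N y ≤ n := by
  obtain ⟨n, x, hx⟩ := nonempty_interior_of_iUnion_of_closed
    (fun n : ℕ => hN.isClosed_preimage (n : ℝ))
    (Set.eq_univ_of_forall fun x => Set.mem_iUnion.2 (exists_nat_ge (N x)))
  exact ⟨x, n, mem_interior_iff_mem_nhds.1 hx⟩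

end LocalConstancy

section BoundedToConstant

variable {N : ℝ → ℝ} {K : Set ℝ}

lemma eq_of_mem_uIcc_of_abs_sub_le {c t x : ℝ} (hx : x ∈ Set.uIcc c t)
    (hle : |t - c| ≤ |t - x|) : x = c := by
  rcases le_total c t with h | h
  · rw [Set.uIcc_of_le h] at hx
    rw [abs_of_nonneg (by linarith), abs_of_nonneg (by linarith [hx.2])] at hle
    linarith [hx.1]
  · rw [Set.uIcc_of_ge h] at hx
    rw [abs_of_nonpos (by linarith), abs_of_nonpos (by linarith [hx.1])] at hle
    linarith [hx.2]

lemma exists_mem_varyingSet_eq (hK : IsClosed K) (hK' : K.OrdConnected)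
    (hN : ∀ s ∈ K, ∀ t ∈ K, BddAbove (N '' Set.uIcc s t) → N s = N t)
    {e t : ℝ} (he : e ∈ varyingSet N K) (ht : t ∈ K) :
    ∃ c ∈ varyingSet N K ∩ Set.uIcc e t, N c = N t := by
  obtain ⟨c, hc, hmin⟩ := (isCompact_uIcc.inter_left (isClosed_varyingSet hK)).exists_isMinOn
    ⟨e, he, Set.left_mem_uIcc⟩ (f := fun x => |t - x|) (by fun_prop)
  have hcK : c ∈ K := hc.1.1
  have const : ∀ s ∈ Set.uIcc c t, s ≠ c → N s = N t := by
    intro s hs hsc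
    refine eq_of_isPreconnected_of_disjoint_varyingSet isPreconnected_uIcc
      (hK'.uIcc_subset (hK'.uIcc_subset hcK ht hs) ht)
      (Set.disjoint_left.2 fun x hx hxE => hsc ?_) Set.left_mem_uIcc Set.right_mem_uIcc
    have hxe : x ∈ Set.uIcc e t :=
      Set.uIcc_subset_uIcc hc.2 Set.right_mem_uIcc
        (Set.uIcc_subset_uIcc hs Set.right_mem_uIcc hx)
    exact eq_of_mem_uIcc_of_abs_sub_le hs
      ((hmin ⟨hxE, hxe⟩).trans (Set.abs_sub_right_of_mem_uIcc hx))
  refine ⟨c, hc, hN c hcK t ht ⟨max (N c) (N t), ?_⟩⟩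
  rintro _ ⟨s, hs, rfl⟩
  rcases eq_or_ne s c with rfl | hsc
  · exact le_max_left _ _
  · exact (const s hs hsc).trans_le (le_max_right _ _)

theorem eq_of_lowerSemicontinuousOn_of_bddAbove (hK : IsClosed K) (hK' : K.OrdConnected)
    (hlsc : LowerSemicontinuousOn N K)
    (hN : ∀ s ∈ K, ∀ t ∈ K, BddAbove (N '' Set.uIcc s t) → N s = N t)
    {s t : ℝ} (hs : s ∈ K) (ht : t ∈ K) : N s = N t := by
  refine eq_of_isPreconnected_of_disjoint_varyingSet hK'.isPreconnected subset_rfl ?_ hs ht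
  suffices varyingSet N K = ∅ by simp [this]
  by_contra! hne
  have := hne.to_subtype
  have := (isClosed_varyingSet (N := N) hK).completeSpace_coe
  obtain ⟨⟨e, he⟩, n, hn⟩ := exists_eventually_le_of_lowerSemicontinuous
    (lowerSemicontinuous_restrict_iff.2 (hlsc.mono fun x (hx : x ∈ varyingSet N K) => hx.1))
  obtain ⟨δ, hδ, hball⟩ := Metric.eventually_nhds_iff.1 hn
  have hbound : ∀ x ∈ K, |x - e| < δ → N x ≤ n := by
    intro x hx hxe
    obtain ⟨c, ⟨hcE, hc⟩, hcx⟩ := exists_mem_varyingSet_eq hK hK' hN he hx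
    rw [← hcx]
    exact hball (y := ⟨c, hcE⟩) ((Set.abs_sub_left_of_mem_uIcc hc).trans_lt hxe)
  refine he.2 (eventually_nhdsWithin_iff.2 ?_)
  filter_upwards [Metric.ball_mem_nhds e hδ] with x hxe hx
  refine (hN e he.1 x hx ⟨n, ?_⟩).symm
  rintro _ ⟨y, hy, rfl⟩
  exact hbound y (hK'.uIcc_subset he.1 hx hy) ((Set.abs_sub_left_of_mem_uIcc hy).trans_lt hxe)

end BoundedToConstant

lemma lowerSemicontinuous_integral_of_nonneg {X α : Type*} [TopologicalSpace X]
    [FirstCountableTopology X] [MeasurableSpace α] {μ : Measure α} {F : X → α → ℝ}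
    (hint : ∀ τ, Integrable (F τ) μ) (hF : ∀ τ x, 0 ≤ F τ x)
    (hcont : ∀ x, Continuous fun τ => F τ x) :
    LowerSemicontinuous fun τ => ∫ x, F τ x ∂μ := by
  have lintegral_eq (τ : X) :
      ∫⁻ x, ENNReal.ofReal (F τ x) ∂μ = ENNReal.ofReal (∫ x, F τ x ∂μ) :=
    (ofReal_integral_eq_lintegral_ofReal (hint τ) (.of_forall (hF τ))).symm
  have fatou (τ : X) : ENNReal.ofReal (∫ x, F τ x ∂μ)
      ≤ liminf (fun σ => ENNReal.ofReal (∫ x, F σ x ∂μ)) (nhds τ) := by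
    simp only [← lintegral_eq]
    refine le_trans (lintegral_mono fun x => ?_)
      (lintegral_liminf_le' fun σ => (hint σ).aemeasurable.ennreal_ofReal)
    exact (ENNReal.tendsto_ofReal (hcont x).continuousAt).liminf_eq.ge
  intro τ y hy
  rcases lt_or_ge y 0 with hy0 | hy0
  · exact .of_forall fun σ => hy0.trans_le (integral_nonneg (hF σ))
  · have hlt : ENNReal.ofReal y < ENNReal.ofReal (∫ x, F τ x ∂μ) :=
      (ENNReal.ofReal_lt_ofReal_iff_of_nonneg hy0).2 hy
    exact (eventually_lt_of_lt_liminf (hlt.trans_le (fatou τ))).mono fun σ =>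
      (ENNReal.ofReal_lt_ofReal_iff_of_nonneg hy0).1

theorem eq_of_tendsto_of_tendsto_deriv_zero {N : ℕ → ℝ → ℝ} {a b B A A' : ℝ} (hab : a ≤ b)
    (hcont : ∀ n, ContinuousOn (N n) (Set.Icc a b))
    (hdiff : ∀ n, ∀ τ ∈ Set.Ioo a b, DifferentiableAt ℝ (N n) τ)
    (hB : ∀ n, ∀ τ ∈ Set.Ioo a b, |deriv (N n) τ| ≤ B)
    (hderiv : ∀ τ ∈ Set.Ioo a b, Tendsto (fun n => deriv (N n) τ) atTop (nhds 0))
    (hA : Tendsto (fun n => N n a) atTop (nhds A))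
    (hA' : Tendsto (fun n => N n b) atTop (nhds A')) : A = A' := by
  have hbound (n : ℕ) : ∀ᵐ τ ∂volume.restrict (Set.Ioo a b), ‖deriv (N n) τ‖ ≤ B :=
    (ae_restrict_iff' measurableSet_Ioo).2 (.of_forall (hB n))
  have ftc (n : ℕ) : ∫ τ in Set.Ioo a b, deriv (N n) τ = N n b - N n a := by
    rw [← integral_Ioc_eq_integral_Ioo, ← intervalIntegral.integral_of_le hab]
    refine intervalIntegral.integral_eq_sub_of_hasDerivAt_of_le hab (hcont n)
      (fun τ hτ => (hdiff n τ hτ).hasDerivAt)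
      ((intervalIntegrable_iff_integrableOn_Ioo_of_le hab).2 ?_)
    exact (integrable_const B).mono' (measurable_deriv _).aestronglyMeasurable (hbound n)
  have lim : Tendsto (fun n => ∫ τ in Set.Ioo a b, deriv (N n) τ) atTop
      (nhds (∫ _ in Set.Ioo a b, 0)) :=
    tendsto_integral_of_dominated_convergence (fun _ => B)
      (fun n => (measurable_deriv _).aestronglyMeasurable) (integrable_const B) hbound
      ((ae_restrict_iff' measurableSet_Ioo).2 (.of_forall hderiv))
  simp only [ftc, integral_zero] at lim
  exact (sub_eq_zero.1 (tendsto_nhds_unique (hA'.sub hA) lim)).symm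

section WeightedEnergy

variable {u v : ℝ → ℝ → ℝ} {w : ℝ → ℝ} {J : Set ℝ} {S C : ℝ}

lemma abs_weight_mul_sq_le {W a : ℝ} (ha : |a| ≤ S) : |W * a ^ 2| ≤ |W| * S ^ 2 := by
  rw [abs_mul, abs_sq]
  exact mul_le_mul_of_nonneg_left (sq_le_sq.2 (ha.trans (le_abs_self S))) (abs_nonneg W)

lemma continuousOn_integral_mul_sq (hw : Integrable w) (hu : ∀ τ ∈ J, Measurable (u τ))
    (huS : ∀ τ ∈ J, ∀ x, |u τ x| ≤ S) (hcont : ∀ x, ContinuousOn (fun τ => u τ x) J) :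
    ContinuousOn (fun τ => ∫ x, w x * u τ x ^ 2) J :=
  continuousOn_of_dominated
    (fun τ hτ => hw.aestronglyMeasurable.mul ((hu τ hτ).pow_const 2).aestronglyMeasurable)
    (fun τ hτ => .of_forall fun x => abs_weight_mul_sq_le (huS τ hτ x))
    (hw.abs.mul_const (S ^ 2))
    (.of_forall fun x => continuousOn_const.mul ((hcont x).pow 2))

lemma hasDerivAt_integral_mul_sq {τ : ℝ} (hJ : J ∈ nhds τ) (hw : Integrable w)
    (hu : ∀ σ ∈ J, Measurable (u σ)) (hv : Measurable (v τ))
    (huS : ∀ σ ∈ J, ∀ x, |u σ x| ≤ S) (hvC : ∀ σ ∈ J, ∀ x, |v σ x| ≤ C)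
    (hder : ∀ σ ∈ J, ∀ x, HasDerivAt (fun σ => u σ x) (v σ x) σ) :
    HasDerivAt (fun σ => ∫ x, w x * u σ x ^ 2) (2 * ∫ x, w x * (u τ x * v τ x)) τ := by
  have hτ : τ ∈ J := mem_of_mem_nhds hJ
  have hmeas (σ) (hσ : σ ∈ J) : AEStronglyMeasurable fun x => w x * u σ x ^ 2 :=
    hw.aestronglyMeasurable.mul ((hu σ hσ).pow_const 2).aestronglyMeasurable
  have hint : Integrable fun x => w x * u τ x ^ 2 :=
    (hw.abs.mul_const (S ^ 2)).mono' (hmeas τ hτ)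
      (.of_forall fun x => abs_weight_mul_sq_le (huS τ hτ x))
  have hmeas' : AEStronglyMeasurable fun x => w x * (2 * (u τ x * v τ x)) :=
    hw.aestronglyMeasurable.mul (((hu τ hτ).mul hv).const_mul 2).aestronglyMeasurable
  have hbound (x) (σ) (hσ : σ ∈ J) :
      ‖w x * (2 * (u σ x * v σ x))‖ ≤ |w x| * (2 * (S * C)) := by
    rw [Real.norm_eq_abs, abs_mul, abs_mul, abs_mul, abs_two]
    have hS : 0 ≤ S := (abs_nonneg _).trans (huS σ hσ x)
    gcongr
    exacts [huS σ hσ x, hvC σ hσ x]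
  have hder' (x) (σ) (hσ : σ ∈ J) :
      HasDerivAt (fun σ => w x * u σ x ^ 2) (w x * (2 * (u σ x * v σ x))) σ :=
    (((hder σ hσ x).pow 2).const_mul (w x)).congr_deriv (by push_cast; ring)
  refine (hasDerivAt_integral_of_dominated_loc_of_deriv_le hJ
    (eventually_of_mem hJ hmeas) hint hmeas' (.of_forall hbound)
    (hw.abs.mul_const _) (.of_forall hder')).2.congr_deriv ?_
  rw [← integral_const_mul]
  simp only [mul_left_comm]

end WeightedEnergy

section Conservation

/-- `u` solves the evolution equation on the time set `I`, with a profile at each time. The bounds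
on the profiles are not assumed to be uniform in time. -/
structure IsProfileSolution (u : ℝ → ℝ → ℝ) (I : Set ℝ) : Prop where
  isProfile : ∀ τ ∈ I, ∃ S, IsProfile (u τ) S
  hasDerivAt : ∀ τ ∈ I, ∀ x, HasDerivAt (fun σ => u σ x) (evolutionRhs (u τ) x) τ

namespace IsProfileSolution

variable {u : ℝ → ℝ → ℝ} {I J : Set ℝ} {s t M : ℝ}

lemma mono (hu : IsProfileSolution u I) (h : J ⊆ I) : IsProfileSolution u J :=
  ⟨fun τ hτ => hu.isProfile τ (h hτ), fun τ hτ => hu.hasDerivAt τ (h hτ)⟩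

lemma continuousOn (hu : IsProfileSolution u I) (x : ℝ) : ContinuousOn (fun τ => u τ x) I :=
  fun τ hτ => (hu.hasDerivAt τ hτ x).continuousAt.continuousWithinAt

lemma hasDerivAt_integral_lorentzian_mul_sq {R S : ℝ} (hR : R ≠ 0) (hu : IsProfileSolution u I)
    (hS : ∀ τ ∈ I, IsProfile (u τ) S) (hM : ∀ τ ∈ I, ∫ x, u τ x ^ 2 ≤ M) {τ : ℝ}
    (hτ : I ∈ nhds τ) :
    HasDerivAt (fun σ => ∫ x, lorentzian R x * u σ x ^ 2)
      (2 * ∫ x, lorentzian R x * (u τ x * evolutionRhs (u τ) x)) τ := by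
  refine hasDerivAt_integral_mul_sq (C := 2 + M + 4 * (1 + 4 * S ^ 2)) hτ
    (v := fun σ => evolutionRhs (u σ)) (integrable_lorentzian hR)
    (fun σ hσ => (hS σ hσ).measurable) (measurable_evolutionRhs (hS τ (mem_of_mem_nhds hτ)))
    (fun σ hσ => (hS σ hσ).abs_le) (fun σ hσ x => ?_) hu.hasDerivAt
  refine (abs_evolutionRhs_le (hS σ hσ) x).trans ?_
  gcongr
  exact hM σ hσ

lemma integral_sq_eq_of_le (hu : IsProfileSolution u (Set.Icc s t)) (hst : s ≤ t)
    (hM : ∀ τ ∈ Set.Icc s t, ∫ x, u τ x ^ 2 ≤ M) : ∫ x, u s x ^ 2 = ∫ x, u t x ^ 2 := by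
  obtain ⟨S, hS⟩ : ∃ S, ∀ τ ∈ Set.Icc s t, IsProfile (u τ) S :=
    ⟨1 + 2 * M, fun τ hτ => (hu.isProfile τ hτ).elim fun _ h => h.of_integral_sq_le (hM τ hτ)⟩
  have one_le (n : ℕ) : (1 : ℝ) ≤ n + 1 := by simp
  have ne_zero (n : ℕ) : (n + 1 : ℝ) ≠ 0 := n.cast_add_one_ne_zero
  have hder (n : ℕ) (τ) (hτ : τ ∈ Set.Ioo s t) :=
    (hu.hasDerivAt_integral_lorentzian_mul_sq (ne_zero n) hS hM (Icc_mem_nhds hτ.1 hτ.2))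
  have lim (τ) (hτ : τ ∈ Set.Icc s t) :=
    tendsto_integral_lorentzian_mul (hS τ hτ).integrable_sq
  refine eq_of_tendsto_of_tendsto_deriv_zero (B := 2 * ((1 + 28 * (1 + 4 * S ^ 2)) * M)) hst
    (fun n => continuousOn_integral_mul_sq (integrable_lorentzian (ne_zero n))
      (fun τ hτ => (hS τ hτ).measurable) (fun τ hτ => (hS τ hτ).abs_le) hu.continuousOn)
    (fun n τ hτ => (hder n τ hτ).differentiableAt) (fun n τ hτ => ?_) (fun τ hτ => ?_)
    (lim s (Set.left_mem_Icc.2 hst)) (lim t (Set.right_mem_Icc.2 hst))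
  · have hτ' := Set.Ioo_subset_Icc_self hτ
    rw [(hder n τ hτ).deriv, abs_mul, abs_two]
    gcongr
    refine (abs_integral_lorentzian_mul_evolutionRhs_le (hS τ hτ') (one_le n)).trans ?_
    gcongr
    exact hM τ hτ'
  · have h := (tendsto_integral_lorentzian_mul_evolutionRhs
      (hS τ (Set.Ioo_subset_Icc_self hτ))).const_mul 2
    rw [mul_zero] at h
    exact h.congr fun n => (hder n τ hτ).deriv.symm

lemma integral_sq_eq_of_bddAbove (hu : IsProfileSolution u (Set.uIcc s t))
    (hM : BddAbove ((fun τ => ∫ x, u τ x ^ 2) '' Set.uIcc s t)) :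
    ∫ x, u s x ^ 2 = ∫ x, u t x ^ 2 := by
  obtain ⟨M, hM⟩ := hM
  rw [mem_upperBounds, Set.forall_mem_image] at hM
  rcases le_total s t with hst | hts
  · rw [Set.uIcc_of_le hst] at hu hM
    exact hu.integral_sq_eq_of_le hst fun _ => @hM _
  · rw [Set.uIcc_of_ge hts] at hu hM
    exact (hu.integral_sq_eq_of_le hts fun _ => @hM _).symm

lemma lowerSemicontinuousOn_integral_sq (hu : IsProfileSolution u I) :
    LowerSemicontinuousOn (fun τ => ∫ x, u τ x ^ 2) I :=
  lowerSemicontinuous_restrict_iff.1 <| lowerSemicontinuous_integral_of_nonneg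
    (F := fun (τ : I) x => u τ x ^ 2)
    (fun τ => (hu.isProfile τ τ.2).elim fun _ h => h.integrable_sq)
    (fun _ _ => sq_nonneg _) fun x => (hu.continuousOn x).domRestrict.pow 2

theorem integral_sq_eq (hu : IsProfileSolution u I) (hI : I.OrdConnected) (hs : s ∈ I)
    (ht : t ∈ I) : ∫ x, u s x ^ 2 = ∫ x, u t x ^ 2 := by
  have hK := hu.mono (hI.uIcc_subset hs ht)
  exact eq_of_lowerSemicontinuousOn_of_bddAbove isCompact_uIcc.isClosed Set.ordConnected_uIcc
    hK.lowerSemicontinuousOn_integral_sq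
    (fun a ha b hb =>
      (hK.mono (Set.ordConnected_uIcc.uIcc_subset ha hb)).integral_sq_eq_of_bddAbove)
    Set.left_mem_uIcc Set.right_mem_uIcc

end IsProfileSolution

end Conservation

section Rescaling

variable {ε : ℝ} {f g h : ℝ → ℝ}

lemma abs_le_of_integrable_deriv (hf : ContDiff ℝ 1 f) (hf' : Integrable (deriv f)) (x : ℝ) :
    |f x| ≤ |f 0| + ∫ y, |deriv f y| := by
  have ftc : ∫ y in 0..x, deriv f y = f x - f 0 :=
    intervalIntegral.integral_deriv_eq_sub (fun y _ => hf.differentiable one_ne_zero y)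
      hf'.intervalIntegrable
  calc |f x| = |f 0 + ∫ y in 0..x, deriv f y| := by rw [ftc, add_sub_cancel]
    _ ≤ |f 0| + |∫ y in 0..x, deriv f y| := abs_add_le _ _
    _ ≤ |f 0| + ∫ y, |deriv f y| := by
      gcongr
      exact intervalIntegral.norm_integral_le_integral_norm_uIoc.trans
        (setIntegral_le_integral hf'.norm (.of_forall fun y => norm_nonneg _))

lemma exists_isProfile (hf : ContDiff ℝ 1 f) (hint : Integrable f) (hint' : Integrable (deriv f))
    (hsmall : ∀ x, |deriv f x| ≤ 1 / 2) : ∃ S, IsProfile f S :=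
  ⟨_, hf, hsmall, abs_le_of_integrable_deriv hf hint', hint, hint'⟩

lemma integral_nonlinearity_eq_potential {S : ℝ} (hε : ε ≠ 0)
    (hf : IsProfile (fun x => ε * g x) S) (x : ℝ) :
    ∫ y, (x - y) * deriv g y * (-(1 / ε ^ 2) * (Real.log (1 - ε * ((g x - g y) / (x - y))) +
      ε * ((g x - g y) / (x - y)))) = -(1 / ε ^ 3) * potential (fun x => ε * g x) x := by
  rw [← hf.integral_mul_deriv_mul_logRemainder, ← integral_const_mul]
  congr 1
  ext y
  rw [deriv_const_mul_field, logRemainder, ← mul_sub, mul_div_assoc]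
  field_simp

lemma evolutionRhs_const_mul {S : ℝ} (hε : ε ≠ 0) (hf : IsProfile (fun x => ε * g x) S)
    (hh : IsHilbertTransform g h) (x : ℝ) :
    ε * (h x - ε ^ 2 / Real.pi * deriv (fun x => ∫ y, (x - y) * deriv g y *
      (-(1 / ε ^ 2) * (Real.log (1 - ε * ((g x - g y) / (x - y))) +
        ε * ((g x - g y) / (x - y))))) x) = evolutionRhs (fun x => ε * g x) x := by
  simp only [integral_nonlinearity_eq_potential hε hf]
  rw [((hf.hasDerivAt_potential x).const_mul _).deriv, evolutionRhs,
    ← (hh.const_mul ε).eq_hilbert hf.lipschitzWith hf.integrable hf.integrable_sq x]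
  field_simp
  ring

end Rescaling

theorem L2_conservation_transformed_equation_general (ε : ℝ) (hε : ε ≠ 0)
    (I : Set ℝ) (hI : I.OrdConnected) (g Hg : ℝ → ℝ → ℝ)
    (hC1 : ∀ t ∈ I, ContDiff ℝ 1 (g t)) (hint : ∀ t ∈ I, Integrable (g t))
    (hint' : ∀ t ∈ I, Integrable (deriv (g t)))
    (hH : ∀ t ∈ I, IsHilbertTransform (g t) (Hg t))
    (hsmall : ∀ t ∈ I, ∀ ξ : ℝ, |ε * deriv (g t) ξ| ≤ 1 / 2)
    (heq : ∀ t ∈ I, ∀ ξ : ℝ,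
      HasDerivAt (fun s => g s ξ)
        (Hg t ξ - (ε ^ 2 / Real.pi) *
          deriv (fun ζ : ℝ => ∫ t' : ℝ,
            (ζ - t') * deriv (g t) t' *
              (-(1 / ε ^ 2) * (Real.log (1 - ε * ((g t ζ - g t t') / (ζ - t'))) +
                ε * ((g t ζ - g t t') / (ζ - t'))))) ξ) t) :
    ∀ t₁ ∈ I, ∀ t₂ ∈ I, (∫ ξ : ℝ, g t₁ ξ ^ 2) = ∫ ξ : ℝ, g t₂ ξ ^ 2 := by
  have deriv_eq (t) : deriv (fun ξ => ε * g t ξ) = fun ξ => ε * deriv (g t) ξ :=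
    funext fun ξ => deriv_const_mul_field ε
  have hf (t) (ht : t ∈ I) : ∃ S, IsProfile (fun ξ => ε * g t ξ) S :=
    exists_isProfile (contDiff_const.mul (hC1 t ht)) ((hint t ht).const_mul ε)
      (deriv_eq t ▸ (hint' t ht).const_mul ε) (deriv_eq t ▸ hsmall t ht)
  have solution : IsProfileSolution (fun t ξ => ε * g t ξ) I :=
    ⟨hf, fun t ht ξ => (hf t ht).elim fun _ hS =>
      ((heq t ht ξ).const_mul ε).congr_deriv (evolutionRhs_const_mul hε hS (hH t ht) ξ)⟩
  intro t₁ h₁ t₂ h₂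
  have conserved := solution.integral_sq_eq hI h₁ h₂
  simp only [mul_pow, integral_const_mul] at conserved
  exact mul_left_cancel₀ (pow_ne_zero 2 hε) conserved

theorem L2_conservation_transformed_equation (ε : ℝ) (hε : ε ≠ 0)
    (I : Set ℝ) (hI : I.OrdConnected)
    (g : ℝ → SchwartzMap ℝ ℝ) (Hg : ℝ → ℝ → ℝ)
    (hH : ∀ t ∈ I, IsHilbertTransform (fun ξ => g t ξ) (Hg t))
    (hsmall : ∀ t ∈ I, ∀ ξ : ℝ, |ε * deriv (fun z => g t z) ξ| ≤ 1 / 2)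
    (heq : ∀ t ∈ I, ∀ ξ : ℝ,
      HasDerivAt (fun s => g s ξ)
        (Hg t ξ - (ε ^ 2 / Real.pi) *
          deriv (fun ζ : ℝ => ∫ t' : ℝ,
            (ζ - t') * deriv (fun z => g t z) t' *
              (-(1 / ε ^ 2) * (Real.log (1 - ε * ((g t ζ - g t t') / (ζ - t'))) +
                ε * ((g t ζ - g t t') / (ζ - t'))))) ξ) t) :
    ∀ t₁ ∈ I, ∀ t₂ ∈ I,
      (∫ ξ : ℝ, (g t₁ ξ) ^ 2) = ∫ ξ : ℝ, (g t₂ ξ) ^ 2 :=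
  L2_conservation_transformed_equation_general ε hε I hI (fun t => g t) Hg
    (fun t _ => (g t).smooth 1) (fun t _ => (g t).integrable)
    (fun t _ => (SchwartzMap.derivCLM ℝ ℝ (g t)).integrable) hH hsmall heq
end
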